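/- Suppose d is an intrinsic metric on S such that for every i ∈ I and every continuous map γ : [0,1] → D one has L(γ, d[l^{(i)}]) = L(σᵢ ∘ γ, d). Then d = d[l]; that is, d[l] is the unique intrinsic metric on S preserving the lengths of curves on the Euclidean triangles. -/

import Mathlib

noncomputable section

open Set
open scoped ENNReal

/-- The Euclidean plane `ℝ²` with the Euclidean metric. -/
abbrev E2 : Type := EuclideanSpace ℝ (Fin 2)

/-- Vertices of the fixed closed regular (equilateral) triangle of side length 1. -/
def p0 : E2 := !₂[0, 0]
def p1 : E2 := !₂[1, 0]
def p2 : E2 := !₂[1 / 2, Real.sqrt 3 / 2]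

/-- `Dtri` is the fixed closed regular triangle in `ℝ²` with edge length 1. -/
def Dtri : Set E2 := convexHull ℝ {p0, p1, p2}

/-- `V0` is the set of the three vertices of `Dtri`. -/
def V0 : Set E2 := {p0, p1, p2}

/-- The three closed edges of `Dtri`. -/
def e01 : Set E2 := segment ℝ p0 p1
def e12 : Set E2 := segment ℝ p1 p2
def e02 : Set E2 := segment ℝ p0 p2

/-- `E0` is the set of the three closed edges of `Dtri`. -/
def E0 : Set (Set E2) := {e01, e12, e02}

/-- The open edge `e° = e ∖ V₀`. -/
def eo (e : Set E2) : Set E2 := e \ V0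

/-- `Do = D°` is the interior of `Dtri` in `ℝ²`. -/
def Do : Set E2 := interior Dtri

/-- `l : E₀ → ℝ` is positive and satisfies the strict triangle inequalities:
`l e₁ + l e₂ > l e₃` whenever `{e₁, e₂, e₃} = E₀`. -/
def TriIneq (l : Set E2 → ℝ) : Prop :=
  (∀ e ∈ E0, 0 < l e) ∧
  ∀ e₁ e₂ e₃ : Set E2, ({e₁, e₂, e₃} : Set (Set E2)) = E0 → l e₁ + l e₂ > l e₃

/-- A linear map `f : ℝ² → ℝ²` realizes the edge lengths `l`, i.e. for each `e ∈ E₀`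
the segment `f(e)` has Euclidean length `l e`. -/
def Realizes (f : E2 →ₗ[ℝ] E2) (l : Set E2 → ℝ) : Prop :=
  dist (f p0) (f p1) = l e01 ∧ dist (f p1) (f p2) = l e12 ∧ dist (f p0) (f p2) = l e02

/-- The metric `d[l]` on `Dtri`, defined by `d[l](x,y) = |f x - f y|₂` for a linear map `f`
realizing the edge lengths `l` (this is independent of the choice of `f`). -/
def dD (l : Set E2 → ℝ) (x y : E2) : ℝ :=
  letI := Classical.propDecidable (∃ f : E2 →ₗ[ℝ] E2, Realizes f l)
  if h : ∃ f : E2 →ₗ[ℝ] E2, Realizes f l then dist (h.choose x) (h.choose y) else 0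

/-- A triangulation `T = (σᵢ)_{i ∈ I}`, `I = Fin n`, of a topological space `S`:
a finite family of continuous maps `σᵢ : Dtri → S` such that
(a) `σᵢ` is injective on each open edge, (b) `σᵢ` is injective on `D°`,
(c) `S` is the disjoint union of `⋃ᵢ σᵢ(V₀)`, the sets `σᵢ(D°)`, and the distinct sets
among the `σᵢ(e°)`, and (d) glued edges are identified by a linear homeomorphism. -/
structure Triangulation (S : Type) [TopologicalSpace S] (n : ℕ) where
  σ : Fin n → E2 → S
  continuousOn : ∀ i, ContinuousOn (σ i) Dtri
  inj_edge : ∀ i, ∀ e ∈ E0, InjOn (σ i) (eo e)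
  inj_int : ∀ i, InjOn (σ i) Do
  cover : (⋃ i, σ i '' V0) ∪ (⋃ i, σ i '' Do) ∪ (⋃ i, ⋃ e ∈ E0, σ i '' eo e) = univ
  disj_int : ∀ i j, i ≠ j → Disjoint (σ i '' Do) (σ j '' Do)
  disj_vert_int : ∀ j, Disjoint (⋃ i, σ i '' V0) (σ j '' Do)
  disj_vert_edge : ∀ j, ∀ e ∈ E0, Disjoint (⋃ i, σ i '' V0) (σ j '' eo e)
  disj_int_edge : ∀ i j, ∀ e ∈ E0, Disjoint (σ i '' Do) (σ j '' eo e)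
  edge_eq_or_disjoint : ∀ i j, ∀ e ∈ E0, ∀ e' ∈ E0,
    σ i '' eo e = σ j '' eo e' ∨ Disjoint (σ i '' eo e) (σ j '' eo e')
  glue : ∀ i j, ∀ e ∈ E0, ∀ e' ∈ E0, σ i '' eo e = σ j '' eo e' →
    ∃ A : E2 →ᵃ[ℝ] E2, A '' e = e' ∧ ∀ x ∈ e, σ j (A x) = σ i x

variable {S : Type} [TopologicalSpace S] {n : ℕ}

/-- `l ∈ ℝ^{E(T)}_Δ`: `l` assigns positive lengths to the edges of `T` satisfying the
strict triangle inequalities in each triangle. -/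
def TriIneqT (T : Triangulation S n) (l : Set S → ℝ) : Prop :=
  (∀ (i : Fin n), ∀ e ∈ E0, 0 < l (T.σ i '' e)) ∧
  ∀ (i : Fin n), ∀ e₁ e₂ e₃ : Set E2, ({e₁, e₂, e₃} : Set (Set E2)) = E0 →
    l (T.σ i '' e₁) + l (T.σ i '' e₂) > l (T.σ i '' e₃)

/-- The restricted edge lengths `l^{(i)}` on the triangle `σᵢ(D)`: `l^{(i)}_e = l_{σᵢ(e)}`. -/
def lRes (T : Triangulation S n) (l : Set S → ℝ) (i : Fin n) : Set E2 → ℝ :=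
  fun e => l (T.σ i '' e)

/-- `dᵢ(x,y) = min { d[l^{(i)}](x',y') : x' ∈ σᵢ⁻¹(x), y' ∈ σᵢ⁻¹(y) }` for `x, y ∈ σᵢ(D)`. -/
def dTri (T : Triangulation S n) (l : Set S → ℝ) (i : Fin n) (x y : S) : ℝ :=
  sInf { r | ∃ x' ∈ Dtri, ∃ y' ∈ Dtri,
    T.σ i x' = x ∧ T.σ i y' = y ∧ r = dD (lRes T l i) x' y' }

/-- The set of sums `Σ_j d_{i_j}(x_{j-1}, x_j)` over chains from `x` to `y`. -/
def chainSums (T : Triangulation S n) (l : Set S → ℝ) (x y : S) : Set ℝ :=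
  { r | ∃ (k : ℕ) (c : ℕ → S) (idx : ℕ → Fin n),
      c 0 = x ∧ c k = y ∧
      (∀ j < k, c j ∈ T.σ (idx j) '' Dtri ∧ c (j + 1) ∈ T.σ (idx j) '' Dtri) ∧
      r = ∑ j ∈ Finset.range k, dTri T l (idx j) (c j) (c (j + 1)) }

/-- The glued metric `d[l]` on `S`. -/
def dGlue (T : Triangulation S n) (l : Set S → ℝ) (x y : S) : ℝ :=
  sInf (chainSums T l x y)

/-- The length `L(γ, d)` of a curve `γ : [0,1] → X` with respect to a metric `d`:
`L(γ,d) = sup { Σ_j d(γ t_{j-1}, γ t_j) : 0 = t₀ < t₁ < ... < t_k = 1 }`, valued in `[0,∞]`. -/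
def pathLen {X : Type} (d : X → X → ℝ) (γ : ℝ → X) : ℝ≥0∞ :=
  ⨆ (k : ℕ) (t : Fin (k + 1) → ℝ) (_ : StrictMono t ∧ t 0 = 0 ∧ t (Fin.last k) = 1),
    ENNReal.ofReal (∑ j : Fin k, d (γ (t j.castSucc)) (γ (t j.succ)))


/-! ### Geometry of the triangle -/

def bc0 (x : E2) : ℝ := 1 - x 0 - x 1 / Real.sqrt 3
def bc1 (x : E2) : ℝ := x 0 - x 1 / Real.sqrt 3
def bc2 (x : E2) : ℝ := 2 * x 1 / Real.sqrt 3

lemma bc_cont : Continuous bc0 ∧ Continuous bc1 ∧ Continuous bc2 := by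
  refine ⟨?_, ?_, ?_⟩
  · unfold bc0; fun_prop
  · unfold bc1; fun_prop
  · unfold bc2; fun_prop

lemma bc_sum (x : E2) : bc0 x + bc1 x + bc2 x = 1 := by
  unfold bc0 bc1 bc2; ring

lemma bc_eq (x : E2) : bc0 x • p0 + bc1 x • p1 + bc2 x • p2 = x := by
  have h3 : Real.sqrt 3 ≠ 0 := by positivity
  ext i
  fin_cases i
  · simp [bc0, bc1, bc2, p0, p1, p2]; ring
  · simp [bc0, bc1, bc2, p0, p1, p2]; field_simp

lemma bc_comb (a b c : ℝ) (h : a + b + c = 1) :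
    bc0 (a • p0 + b • p1 + c • p2) = a ∧ bc1 (a • p0 + b • p1 + c • p2) = b ∧
    bc2 (a • p0 + b • p1 + c • p2) = c := by
  have h3 : Real.sqrt 3 ≠ 0 := by positivity
  refine ⟨?_, ?_, ?_⟩
  · simp [bc0, p0, p1, p2]; field_simp; linarith
  · simp [bc1, p0, p1, p2]; field_simp; ring
  · simp [bc2, p0, p1, p2]; field_simp

lemma Dtri_convex : Convex ℝ Dtri := convex_convexHull ℝ _

lemma Dtri_compact : IsCompact Dtri := by
  unfold Dtri
  exact Set.Finite.isCompact_convexHull (𝕜 := ℝ) (Set.toFinite _)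

lemma V0_sub : V0 ⊆ Dtri := subset_convexHull ℝ _

lemma mem_Dtri_of {x : E2} (h0 : 0 ≤ bc0 x) (h1 : 0 ≤ bc1 x) (h2 : 0 ≤ bc2 x) : x ∈ Dtri := by
  unfold Dtri
  have hx := bc_eq x
  have hs := bc_sum x
  have hc := Dtri_convex
  have m0 : p0 ∈ Dtri := V0_sub (by simp [V0])
  have m1 : p1 ∈ Dtri := V0_sub (by simp [V0])
  have m2 : p2 ∈ Dtri := V0_sub (by simp [V0])
  have := hc.sum_mem (t := Finset.univ) (w := ![bc0 x, bc1 x, bc2 x]) (z := ![p0, p1, p2])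
    (by intro i _; fin_cases i <;> simpa) (by simp [Fin.sum_univ_three, hs])
    (by intro i _; fin_cases i <;> simpa)
  simp [Fin.sum_univ_three, hx] at this
  exact this

lemma Dtri_bc {x : E2} (hx : x ∈ Dtri) : 0 ≤ bc0 x ∧ 0 ≤ bc1 x ∧ 0 ≤ bc2 x := by
  have hc : Convex ℝ {x : E2 | 0 ≤ bc0 x ∧ 0 ≤ bc1 x ∧ 0 ≤ bc2 x} := by
    intro x hx y hy a b ha hb hab
    have e0 : bc0 (a • x + b • y) = a * bc0 x + b * bc0 y := by
      simp [bc0]; linear_combination -hab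
    have e1 : bc1 (a • x + b • y) = a * bc1 x + b * bc1 y := by
      simp [bc1]; ring
    have e2 : bc2 (a • x + b • y) = a * bc2 x + b * bc2 y := by
      simp [bc2]; ring
    obtain ⟨x0, x1, x2⟩ := hx
    obtain ⟨y0, y1, y2⟩ := hy
    refine ⟨?_, ?_, ?_⟩
    · rw [e0]; positivity
    · rw [e1]; positivity
    · rw [e2]; positivity
  have hsub : ({p0, p1, p2} : Set E2) ⊆ {x : E2 | 0 ≤ bc0 x ∧ 0 ≤ bc1 x ∧ 0 ≤ bc2 x} := by
    have h0 := bc_comb 1 0 0 (by norm_num)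
    have h1 := bc_comb 0 1 0 (by norm_num)
    have h2 := bc_comb 0 0 1 (by norm_num)
    simp only [one_smul, zero_smul, add_zero, zero_add] at h0 h1 h2
    rintro x (rfl | rfl | rfl)
    · simp [h0]
    · simp [h1]
    · simp [h2]
  exact convexHull_min hsub hc hx

lemma pos_sub_Do : {x : E2 | 0 < bc0 x ∧ 0 < bc1 x ∧ 0 < bc2 x} ⊆ Do := by
  apply interior_maximal
  · rintro x ⟨h0, h1, h2⟩
    exact mem_Dtri_of h0.le h1.le h2.le
  · obtain ⟨c0, c1, c2⟩ := bc_cont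
    exact (isOpen_lt continuous_const c0).inter
      ((isOpen_lt continuous_const c1).inter (isOpen_lt continuous_const c2))

lemma Do_nonempty : Do.Nonempty := by
  refine ⟨(1/3 : ℝ) • p0 + (1/3 : ℝ) • p1 + (1/3 : ℝ) • p2, pos_sub_Do ?_⟩
  obtain ⟨h0, h1, h2⟩ := bc_comb (1/3) (1/3) (1/3) (by norm_num)
  simp only [mem_ofPred_eq, h0, h1, h2]
  norm_num

lemma Do_sub : Do ⊆ Dtri := interior_subset

lemma Do_open : IsOpen Do := isOpen_interior

lemma Dtri_cases {x : E2} (hx : x ∈ Dtri) : x ∈ Do ∨ x ∈ V0 ∨ ∃ e ∈ E0, x ∈ eo e := by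
  obtain ⟨h0, h1, h2⟩ := Dtri_bc hx
  have hs := bc_sum x
  have he := bc_eq x
  by_cases hv : x ∈ V0
  · exact Or.inr (Or.inl hv)
  rcases h0.eq_or_lt with h0' | h0'
  · refine Or.inr (Or.inr ⟨e12, by simp [E0], ?_, hv⟩)
    exact ⟨bc1 x, bc2 x, h1, h2, by linarith, by rw [← h0'] at he; simpa using he⟩
  rcases h1.eq_or_lt with h1' | h1'
  · refine Or.inr (Or.inr ⟨e02, by simp [E0], ?_, hv⟩)
    exact ⟨bc0 x, bc2 x, h0, h2, by linarith, by rw [← h1'] at he; simpa using he⟩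
  rcases h2.eq_or_lt with h2' | h2'
  · refine Or.inr (Or.inr ⟨e01, by simp [E0], ?_, hv⟩)
    exact ⟨bc0 x, bc1 x, h0, h1, by linarith, by rw [← h2'] at he; simpa using he⟩
  exact Or.inl (pos_sub_Do ⟨h0', h1', h2'⟩)

lemma edge_bc : (∀ x ∈ e01, bc2 x = 0) ∧ (∀ x ∈ e12, bc0 x = 0) ∧ (∀ x ∈ e02, bc1 x = 0) := by
  refine ⟨?_, ?_, ?_⟩
  · rintro x ⟨a, b, _, _, hab, rfl⟩
    simpa using (bc_comb a b 0 (by linarith)).2.2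
  · rintro x ⟨a, b, _, _, hab, rfl⟩
    simpa using (bc_comb 0 a b (by linarith)).1
  · rintro x ⟨a, b, _, _, hab, rfl⟩
    simpa using (bc_comb a 0 b (by linarith)).2.1

lemma edge_inter {e e' : Set E2} (he : e ∈ E0) (he' : e' ∈ E0) (hne : e ≠ e') {x : E2}
    (hx : x ∈ e) (hx' : x ∈ e') : x ∈ V0 := by
  have hs := bc_sum x
  have hq := bc_eq x
  obtain ⟨b1, b2, b3⟩ := edge_bc
  rcases he with rfl | rfl | rfl <;> rcases he' with rfl | rfl | rfl <;>
    first
    | exact absurd rfl hne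
    | (simp only [V0, mem_insert_iff, mem_singleton_iff]
       first
       | (have h1 := b1 x ‹_›; have h2 := b2 x ‹_›
          rw [h1, h2] at hq hs; simp at hs; simp [hs] at hq; simp [hq])
       | (have h1 := b1 x ‹_›; have h2 := b3 x ‹_›
          rw [h1, h2] at hq hs; simp at hs; simp [hs] at hq; simp [hq])
       | (have h1 := b2 x ‹_›; have h2 := b3 x ‹_›
          rw [h1, h2] at hq hs; simp at hs; simp [hs] at hq; simp [hq]))

lemma edge_seg {e : Set E2} (he : e ∈ E0) :
    ∃ u ∈ V0, ∃ w ∈ V0, e = segment ℝ u w ∧ u ≠ w := by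
  have h0 := bc_comb 1 0 0 (by norm_num)
  have h1 := bc_comb 0 1 0 (by norm_num)
  have h2 := bc_comb 0 0 1 (by norm_num)
  simp only [one_smul, zero_smul, add_zero, zero_add] at h0 h1 h2
  rcases he with rfl | rfl | rfl
  · refine ⟨p0, by simp [V0], p1, by simp [V0], rfl, fun hne => ?_⟩
    rw [hne] at h0; linarith
  · refine ⟨p1, by simp [V0], p2, by simp [V0], rfl, fun hne => ?_⟩
    rw [hne] at h1; linarith
  · refine ⟨p0, by simp [V0], p2, by simp [V0], rfl, fun hne => ?_⟩
    rw [hne] at h0; linarith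

lemma edge_sub {e : Set E2} (he : e ∈ E0) : e ⊆ Dtri := by
  obtain ⟨u, hu, w, hw, rfl, _⟩ := edge_seg he
  exact Dtri_convex.segment_subset (V0_sub hu) (V0_sub hw)

lemma edge_convex {e : Set E2} (he : e ∈ E0) : Convex ℝ e := by
  obtain ⟨u, hu, w, hw, rfl, _⟩ := edge_seg he
  exact convex_segment _ _

lemma edge_compact {e : Set E2} (he : e ∈ E0) : IsCompact e := by
  obtain ⟨u, hu, w, hw, rfl, _⟩ := edge_seg he
  rw [segment_eq_image_lineMap]
  exact isCompact_Icc.image (by fun_prop)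

lemma E0_finite : E0.Finite := by unfold E0; exact Set.toFinite _
lemma V0_finite : V0.Finite := by unfold V0; exact Set.toFinite _

/-! ### Variation lemmas -/

lemma ev_add {Y : Type} [PseudoEMetricSpace Y] (F : ℝ → Y) {a b c : ℝ} (hab : a ≤ b)
    (hbc : b ≤ c) :
    eVariationOn F (Icc a b) + eVariationOn F (Icc b c) = eVariationOn F (Icc a c) := by
  simpa using eVariationOn.Icc_add_Icc F (s := univ) hab hbc (mem_univ b)

lemma ev_le_of_mono {Y : Type} [PseudoEMetricSpace Y] (F : ℝ → Y) (m : ℝ → ℝ) {a b : ℝ}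
    (hm : ∀ v ∈ Icc a b, ∀ w ∈ Icc a b, v ≤ w →
      m v ≤ m w ∧ edist (F v) (F w) ≤ ENNReal.ofReal (m w - m v)) (hab : a ≤ b) :
    eVariationOn F (Icc a b) ≤ ENNReal.ofReal (m b - m a) := by
  apply iSup_le
  rintro ⟨k, u, hu, us⟩
  have key : ∀ k, ∑ i ∈ Finset.range k, edist (F (u (i + 1))) (F (u i)) ≤
      ENNReal.ofReal (m (u k) - m (u 0)) := by
    intro k
    induction k with
    | zero => simp
    | succ k ih =>
      rw [Finset.sum_range_succ]
      have h1 := hm _ (us k) _ (us (k+1)) (hu (Nat.le_succ k))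
      have h0 := hm _ (us 0) _ (us k) (hu (Nat.zero_le k))
      rw [edist_comm (F (u (k+1)))]
      calc _ ≤ ENNReal.ofReal (m (u k) - m (u 0)) + ENNReal.ofReal (m (u (k+1)) - m (u k)) :=
            add_le_add ih h1.2
        _ = ENNReal.ofReal (m (u (k+1)) - m (u 0)) := by
            rw [← ENNReal.ofReal_add (by linarith [h0.1]) (by linarith [h1.1])]
            congr 1; ring
  refine (key k).trans (ENNReal.ofReal_le_ofReal ?_)
  have h1 := hm _ (us k) b (right_mem_Icc.2 hab) (us k).2
  have h0 := hm a (left_mem_Icc.2 hab) _ (us 0) (us 0).1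
  linarith [h1.1, h0.1]

lemma oneD {Y : Type} [PseudoEMetricSpace Y] (ψ Γ : ℝ → Y) (ℓ h : ℝ → ℝ) (Λ : ℝ) (hΛ : 0 ≤ Λ)
    (K : Set ℝ) (hK : IsClosed K) (a b : ℝ) (aK : a ∈ K) (bK : b ∈ K) (hKs : K ⊆ Icc a b)
    (hc : ContinuousOn h K) (hΓ : ∀ t ∈ K, Γ t = ψ (h t))
    (hℓ : ∀ s ∈ K, ∀ t ∈ K, s ≤ t → ℓ s ≤ ℓ t ∧ edist (Γ s) (Γ t) ≤ ENNReal.ofReal (ℓ t - ℓ s))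
    (hgap : ∀ α ∈ K, ∀ β ∈ K, α ≤ β → (∀ t ∈ K, α < t → t < β → False) →
      Λ * |h β - h α| ≤ ℓ β - ℓ α)
    (hψ : ∀ s ∈ Icc (0:ℝ) 1, ∀ t ∈ Icc (0:ℝ) 1,
      edist (ψ s) (ψ t) ≤ ENNReal.ofReal (Λ * |t - s|))
    (hh : ∀ t ∈ K, h t ∈ Icc (0:ℝ) 1) (hle : h a ≤ h b) :
    eVariationOn ψ (Icc (h a) (h b)) ≤ ENNReal.ofReal (ℓ b - ℓ a) := by
  set B : ℝ → Set ℝ := fun v => {t | t ∈ K ∧ v ≤ h t} with hB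
  set τ : ℝ → ℝ := fun v => sInf (B v) with hτ
  set A : ℝ → Set ℝ := fun v => {s | s ∈ K ∧ (s = a ∨ s < τ v)} with hA
  set α : ℝ → ℝ := fun v => sSup (A v) with hα
  have Bcl : ∀ v, IsClosed (B v) := fun v =>
    hc.preimage_isClosed_of_isClosed hK (isClosed_Ici (a := v))
  have Bbdd : ∀ v, BddBelow (B v) := fun v => ⟨a, fun t ht => (hKs ht.1).1⟩
  have τmem : ∀ v ∈ Icc (h a) (h b), τ v ∈ B v := fun v hv =>
    (Bcl v).csInf_mem ⟨b, bK, hv.2⟩ (Bbdd v)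
  have τlt : ∀ v, ∀ s ∈ K, s < τ v → h s < v := by
    intro v s hs hlt
    by_contra hcon
    exact absurd (csInf_le (Bbdd v) (show s ∈ B v from ⟨hs, not_lt.1 hcon⟩)) (not_le.2 hlt)
  have Ane : ∀ v, (A v).Nonempty := fun v => ⟨a, aK, Or.inl rfl⟩
  have Abdd : ∀ v, BddAbove (A v) := fun v => ⟨b, fun t ht => (hKs ht.1).2⟩
  have αmem : ∀ v ∈ Icc (h a) (h b), α v ∈ K ∧ h (α v) ≤ v := by
    intro v hv
    have hcl : IsClosed {s | s ∈ K ∧ h s ≤ v} :=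
      hc.preimage_isClosed_of_isClosed hK (isClosed_Iic (a := v))
    have hsub : A v ⊆ {s | s ∈ K ∧ h s ≤ v} := by
      rintro s ⟨hs, rfl | hs'⟩
      · exact ⟨hs, hv.1⟩
      · exact ⟨hs, (τlt v s hs hs').le⟩
    exact closure_minimal hsub hcl (csSup_mem_closure (Ane v) (Abdd v))
  have ατ : ∀ v ∈ Icc (h a) (h b), α v ≤ τ v := by
    intro v hv
    apply csSup_le (Ane v)
    rintro s ⟨hs, rfl | hs'⟩
    · exact (hKs (τmem v hv).1).1
    · exact hs'.le
  have αge : ∀ v, ∀ s ∈ K, s < τ v → s ≤ α v := fun v s hs hlt =>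
    le_csSup (Abdd v) ⟨hs, Or.inr hlt⟩
  have gap : ∀ v ∈ Icc (h a) (h b), Λ * (h (τ v) - h (α v)) ≤ ℓ (τ v) - ℓ (α v) := by
    intro v hv
    have := hgap _ (αmem v hv).1 _ (τmem v hv).1 (ατ v hv)
      (fun t ht h1 h2 => absurd (αge v t ht h2) (not_le.2 h1))
    exact (mul_le_mul_of_nonneg_left (le_abs_self _) hΛ).trans this
  have hI : ∀ v ∈ Icc (h a) (h b), v ∈ Icc (0:ℝ) 1 := fun v hv =>
    ⟨(hh a aK).1.trans hv.1, hv.2.trans (hh b bK).2⟩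
  set m : ℝ → ℝ := fun v => ℓ (α v) + Λ * (v - h (α v)) with hm
  have main := ev_le_of_mono ψ m (a := h a) (b := h b) ?_ hle
  · refine main.trans (ENNReal.ofReal_le_ofReal ?_)
    have ha : h a ∈ Icc (h a) (h b) := left_mem_Icc.2 hle
    have hb : h b ∈ Icc (h a) (h b) := right_mem_Icc.2 hle
    have h1 := gap _ hb
    have h2 := (hℓ _ (τmem _ hb).1 b bK (hKs (τmem _ hb).1).2).1
    have h3 := (τmem _ hb).2
    have h4 := (hℓ a aK _ (αmem _ ha).1 (hKs (αmem _ ha).1).1).1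
    have h5 := (αmem _ ha).2
    have h6 : Λ * (h b - h (τ (h b))) ≤ 0 := mul_nonpos_of_nonneg_of_nonpos hΛ (by linarith)
    have h7 : 0 ≤ Λ * (h a - h (α (h a))) := mul_nonneg hΛ (by linarith)
    simp only [hm]
    nlinarith
  · intro v hv w hw hvw
    have hτle : τ v ≤ τ w :=
      csInf_le (Bbdd v) ⟨(τmem w hw).1, hvw.trans (τmem w hw).2⟩
    rcases hτle.eq_or_lt with heq | hlt
    · have hαeq : α v = α w := by simp only [hα, hA, heq]
      have e : m w - m v = Λ * |w - v| := by
        rw [abs_of_nonneg (by linarith)]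
        simp only [hm, hαeq]; ring
      refine ⟨?_, ?_⟩
      · have : 0 ≤ Λ * |w - v| := by positivity
        linarith
      · rw [e]; exact hψ v (hI v hv) w (hI w hw)
    · have hle' := αge w _ (τmem v hv).1 hlt
      have l1 := hℓ _ (τmem v hv).1 _ (αmem w hw).1 hle'
      have g1 := gap v hv
      have n1 : 0 ≤ Λ * (h (τ v) - v) := mul_nonneg hΛ (by linarith [(τmem v hv).2])
      have n2 : 0 ≤ Λ * (w - h (α w)) := mul_nonneg hΛ (by linarith [(αmem w hw).2])
      have key : Λ * (h (τ v) - v) + (ℓ (α w) - ℓ (τ v)) + Λ * (w - h (α w)) ≤ m w - m v := by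
        simp only [hm]; nlinarith
      refine ⟨by linarith [l1.1], ?_⟩
      refine le_trans ?_ (ENNReal.ofReal_le_ofReal key)
      rw [ENNReal.ofReal_add (by linarith [l1.1]) n2, ENNReal.ofReal_add n1 (by linarith [l1.1])]
      refine (edist_triangle4 (ψ v) (Γ (τ v)) (Γ (α w)) (ψ w)).trans ?_
      refine add_le_add (add_le_add ?_ l1.2) ?_
      · rw [hΓ _ (τmem v hv).1]
        have := hψ v (hI v hv) _ (hh _ (τmem v hv).1)
        rwa [abs_of_nonneg (by linarith [(τmem v hv).2])] at this
      · rw [hΓ _ (αmem w hw).1]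
        have := hψ _ (hh _ (αmem w hw).1) w (hI w hw)
        rwa [abs_of_nonneg (by linarith [(αmem w hw).2])] at this

lemma lift_cont {X Z : Type} [TopologicalSpace X] [TopologicalSpace Z] [T2Space Z] [Nonempty X]
    {σ : X → Z} {C O : Set X} (hC : IsCompact C) (hσ : ContinuousOn σ C) (hO : O ⊆ C)
    (hinj : InjOn σ O) (hdisj : ∀ x ∈ C, x ∉ O → σ x ∉ σ '' O)
    {γ : ℝ → Z} {A : Set ℝ} (hγ : ContinuousOn γ A) (hA : ∀ t ∈ A, γ t ∈ σ '' O) :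
    ∃ g : ℝ → X, ContinuousOn g A ∧ ∀ t ∈ A, g t ∈ O ∧ σ (g t) = γ t := by
  classical
  have : ∀ t, ∃ x, t ∈ A → x ∈ O ∧ σ x = γ t := by
    intro t
    by_cases ht : t ∈ A
    · obtain ⟨x, hx, hx'⟩ := hA t ht
      exact ⟨x, fun _ => ⟨hx, hx'⟩⟩
    · exact ⟨Classical.arbitrary X, fun h => absurd h ht⟩
  choose g hg using this
  refine ⟨g, ?_, hg⟩
  rw [continuousOn_iff_isClosed]
  intro F hF
  have hcl : IsClosed (σ '' (C ∩ F)) :=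
    ((hC.inter_right hF).image_of_continuousOn (hσ.mono inter_subset_left)).isClosed
  obtain ⟨U, hU, hU'⟩ := (continuousOn_iff_isClosed.1 hγ) _ hcl
  refine ⟨U, hU, ?_⟩
  rw [← hU']
  ext t
  constructor
  · rintro ⟨h1, h2⟩
    exact ⟨⟨g t, ⟨hO (hg t h2).1, h1⟩, (hg t h2).2⟩, h2⟩
  · rintro ⟨⟨x, ⟨hxC, hxF⟩, hx⟩, h2⟩
    refine ⟨?_, h2⟩
    have hxO : x ∈ O := by
      by_contra hcon
      exact hdisj x hxC hcon (by rw [hx]; exact hA t h2)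
    have : x = g t := hinj hxO (hg t h2).1 (by rw [hx, (hg t h2).2])
    show g t ∈ F
    rwa [← this]

/-- `pathLen` is the variation. -/
lemma pathLen_eq {X Y : Type} [PseudoEMetricSpace Y] (D : X → X → ℝ) (γ : ℝ → X) (F : ℝ → Y)
    (h0 : ∀ x y, 0 ≤ D x y) (h : ∀ s t, edist (F s) (F t) = ENNReal.ofReal (D (γ s) (γ t))) :
    pathLen D γ = eVariationOn F (Icc 0 1) := by
  have hsum : ∀ (k : ℕ) (t : Fin (k+1) → ℝ),
      ENNReal.ofReal (∑ j : Fin k, D (γ (t j.castSucc)) (γ (t j.succ))) =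
      ∑ j : Fin k, edist (F (t j.castSucc)) (F (t j.succ)) := by
    intro k t
    rw [ENNReal.ofReal_sum_of_nonneg (fun _ _ => h0 _ _)]
    simp [h]
  apply le_antisymm
  · refine iSup_le fun k => iSup_le fun t => iSup_le fun ht => ?_
    rw [hsum]
    obtain ⟨hm, ht0, ht1⟩ := ht
    set u : ℕ → ℝ := fun i => t ⟨min i k, by omega⟩ with hu
    have hum : Monotone u := fun i j hij => hm.monotone (by
      simp only [Fin.mk_le_mk]; omega)
    have hus : ∀ i, u i ∈ Icc (0:ℝ) 1 := fun i =>
      ⟨by rw [← ht0]; exact hm.monotone (Fin.zero_le _),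
       by rw [← ht1]; exact hm.monotone (Fin.le_last _)⟩
    refine le_trans (le_of_eq ?_) (eVariationOn.sum_le (f := F) (n := k) hum hus)
    rw [Finset.sum_range]
    refine Finset.sum_congr rfl fun j _ => ?_
    rw [edist_comm]
    have e1 : u (j + 1) = t j.succ := by
      simp only [hu]; congr 1; ext; simp
    have e2 : u j = t j.castSucc := by
      simp only [hu]; congr 1; ext; simp
    rw [e1, e2]
  · apply iSup_le
    rintro ⟨k, u, hu, us⟩
    have key : ∀ k, ∃ (m : ℕ) (t : Fin (m+1) → ℝ), StrictMono t ∧ t 0 = 0 ∧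
        t (Fin.last m) = u k ∧ ∑ i ∈ Finset.range k, edist (F (u (i + 1))) (F (u i)) ≤
        ∑ j : Fin m, edist (F (t j.castSucc)) (F (t j.succ)) := by
      have ext' : ∀ (m : ℕ) (t : Fin (m+1) → ℝ) (c : ℝ), StrictMono t → t 0 = 0 →
          t (Fin.last m) < c → ∃ (t' : Fin (m+1+1) → ℝ), StrictMono t' ∧ t' 0 = 0 ∧
          t' (Fin.last (m+1)) = c ∧ ∑ j : Fin (m+1), edist (F (t' j.castSucc)) (F (t' j.succ)) =
          ∑ j : Fin m, edist (F (t j.castSucc)) (F (t j.succ)) + edist (F (t (Fin.last m))) (F c) := by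
        intro m t c hm h0 hc
        refine ⟨Fin.snoc t c, ?_, ?_, by simp, ?_⟩
        · rw [Fin.strictMono_iff_lt_succ]
          intro i
          refine Fin.lastCases ?_ (fun i => ?_) i
          · simpa using hc
          · rw [Fin.succ_castSucc, Fin.snoc_castSucc, Fin.snoc_castSucc]
            exact hm (Fin.castSucc_lt_succ)
        · rw [← h0]; exact Fin.snoc_castSucc (α := fun _ => ℝ) c t 0
        · rw [Fin.sum_univ_castSucc]
          simp [Fin.succ_castSucc, - Fin.castSucc_succ]
      have step : ∀ (m : ℕ) (t : Fin (m+1) → ℝ) (c : ℝ), StrictMono t → t 0 = 0 →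
          t (Fin.last m) ≤ c → ∃ (m' : ℕ) (t' : Fin (m'+1) → ℝ), StrictMono t' ∧ t' 0 = 0 ∧
          t' (Fin.last m') = c ∧
          ∑ j : Fin m, edist (F (t j.castSucc)) (F (t j.succ)) + edist (F (t (Fin.last m))) (F c) ≤
          ∑ j : Fin m', edist (F (t' j.castSucc)) (F (t' j.succ)) := by
        intro m t c hm h0 hc
        rcases hc.eq_or_lt with hc | hc
        · exact ⟨m, t, hm, h0, hc, by simp [hc]⟩
        · obtain ⟨t', a1, a2, a3, a4⟩ := ext' m t c hm h0 hc
          exact ⟨m+1, t', a1, a2, a3, a4.ge⟩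
      intro k
      induction k with
      | zero =>
        obtain ⟨m, t, a1, a2, a3, a4⟩ := step 0 (fun _ => 0) (u 0)
          (fun i j hij => by omega) rfl (us 0).1
        exact ⟨m, t, a1, a2, a3, by simp⟩
      | succ k ih =>
        obtain ⟨m, t, a1, a2, a3, a4⟩ := ih
        obtain ⟨m', t', b1, b2, b3, b4⟩ := step m t (u (k+1)) a1 a2 (by
          rw [a3]; exact hu (Nat.le_succ k))
        refine ⟨m', t', b1, b2, b3, le_trans ?_ b4⟩
        rw [Finset.sum_range_succ, a3, edist_comm (F (u (k+1)))]
        gcongr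
    obtain ⟨m, t, a1, a2, a3, a4⟩ := key k
    -- extend to the endpoint 1
    by_cases hlast : u k = 1
    · refine a4.trans ?_
      rw [← hsum]
      refine le_iSup_of_le m (le_iSup_of_le t (le_iSup_of_le ⟨a1, a2, a3.trans hlast⟩ le_rfl))
    · have hlt : t (Fin.last m) < 1 := by
        rw [a3]; exact lt_of_le_of_ne (us k).2 hlast
      have hm' : StrictMono (Fin.snoc (α := fun _ => ℝ) t 1 : Fin (m+1+1) → ℝ) := by
        rw [Fin.strictMono_iff_lt_succ]
        intro i
        refine Fin.lastCases ?_ (fun i => ?_) i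
        · simpa using hlt
        · rw [Fin.succ_castSucc, Fin.snoc_castSucc, Fin.snoc_castSucc]
          exact a1 (Fin.castSucc_lt_succ)
      have h0' : (Fin.snoc (α := fun _ => ℝ) t 1 : Fin (m+1+1) → ℝ) 0 = 0 := by
        rw [← a2]; exact Fin.snoc_castSucc (α := fun _ => ℝ) 1 t 0
      refine a4.trans ?_
      refine le_trans ?_ (le_iSup_of_le (m+1) (le_iSup_of_le _
        (le_iSup_of_le ⟨hm', h0', by simp⟩ le_rfl)))
      rw [hsum, Fin.sum_univ_castSucc]
      simp [Fin.succ_castSucc, - Fin.castSucc_succ]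

/-! ### Consequences of length preservation -/

def HL (T : Triangulation S n) (f : Fin n → E2 →ₗ[ℝ] E2) {Y : Type} [PseudoEMetricSpace Y]
    (q : S → Y) : Prop :=
  ∀ (i : Fin n) (s t : ℝ) (g : ℝ → E2), s ≤ t → ContinuousOn g (Icc s t) →
    (∀ u ∈ Icc s t, g u ∈ Dtri) →
    eVariationOn (f i ∘ g) (Icc s t) = eVariationOn (q ∘ T.σ i ∘ g) (Icc s t)

lemma lin_cont (f : E2 →ₗ[ℝ] E2) : Continuous f := f.continuous_of_finiteDimensional

lemma lin_lineMap (f : E2 →ₗ[ℝ] E2) (x y : E2) (v : ℝ) :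
    f (AffineMap.lineMap x y v) = AffineMap.lineMap (f x) (f y) v :=
  AffineMap.apply_lineMap f.toAffineMap x y v

lemma lin_seg_edist (f : E2 →ₗ[ℝ] E2) (x y : E2) (v w : ℝ) :
    edist (f (AffineMap.lineMap x y v)) (f (AffineMap.lineMap x y w)) =
    ENNReal.ofReal (dist (f x) (f y) * |w - v|) := by
  rw [edist_dist, lin_lineMap, lin_lineMap, dist_lineMap_lineMap, dist_comm v w, Real.dist_eq,
    mul_comm]

lemma seg_ev_le (f : E2 →ₗ[ℝ] E2) (x y : E2) {s t : ℝ} (hst : s ≤ t) :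
    eVariationOn (f ∘ AffineMap.lineMap x y) (Icc s t) =
    ENNReal.ofReal (dist (f x) (f y) * (t - s)) := by
  apply le_antisymm
  · have := ev_le_of_mono (f ∘ AffineMap.lineMap x y) (fun v => dist (f x) (f y) * v)
      (a := s) (b := t) ?_ hst
    · refine this.trans (le_of_eq ?_); congr 1; ring
    · intro v _ w _ hvw
      refine ⟨mul_le_mul_of_nonneg_left hvw dist_nonneg, ?_⟩
      simp only [Function.comp]
      rw [lin_seg_edist, abs_of_nonneg (by linarith)]
      apply le_of_eq; congr 1; ring
  · have := eVariationOn.edist_le (f ∘ AffineMap.lineMap x y) (left_mem_Icc.2 hst)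
      (right_mem_Icc.2 hst)
    simp only [Function.comp] at this
    rwa [lin_seg_edist, abs_of_nonneg (by linarith)] at this

lemma lineMap_mem {C : Set E2} (hC : Convex ℝ C) {x y : E2} (hx : x ∈ C) (hy : y ∈ C)
    {v : ℝ} (hv : v ∈ Icc (0:ℝ) 1) : AffineMap.lineMap x y v ∈ C := by
  apply hC.segment_subset hx hy
  rw [segment_eq_image_lineMap]
  exact ⟨v, hv, rfl⟩

lemma lineMap_contOn (x y : E2) (s : Set ℝ) :
    ContinuousOn (fun v : ℝ => (AffineMap.lineMap x y v : E2)) s := by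
  fun_prop

section
variable {T : Triangulation S n} {f : Fin n → E2 →ₗ[ℝ] E2} {Y : Type} [PseudoEMetricSpace Y]
  {q : S → Y}

lemma HL.seg (h : HL T f q) (i : Fin n) {x y : E2} (hx : x ∈ Dtri) (hy : y ∈ Dtri) {s t : ℝ}
    (hs : 0 ≤ s) (hst : s ≤ t) (ht : t ≤ 1) :
    eVariationOn (q ∘ T.σ i ∘ AffineMap.lineMap x y) (Icc s t) =
    ENNReal.ofReal (dist (f i x) (f i y) * (t - s)) := by
  rw [← seg_ev_le _ _ _ hst]
  exact (h i s t _ hst (lineMap_contOn x y _) (fun u hu =>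
    lineMap_mem Dtri_convex hx hy ⟨hs.trans hu.1, hu.2.trans ht⟩)).symm

lemma HL.q_le (h : HL T f q) (i : Fin n) {x y : E2} (hx : x ∈ Dtri) (hy : y ∈ Dtri) :
    edist (q (T.σ i x)) (q (T.σ i y)) ≤ edist (f i x) (f i y) := by
  have h1 := h.seg i hx hy le_rfl zero_le_one le_rfl
  have h2 := eVariationOn.edist_le (q ∘ T.σ i ∘ AffineMap.lineMap x y)
    (left_mem_Icc.2 (zero_le_one (α := ℝ))) (right_mem_Icc.2 zero_le_one)
  rw [h1] at h2
  simpa [edist_dist] using h2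

lemma HL.inj (h : HL T f q) (hq : ∀ x y, edist (q x) (q y) = 0 → x = y) (i : Fin n) :
    Function.Injective (f i) := by
  rw [← LinearMap.ker_eq_bot, LinearMap.ker_eq_bot']
  intro z hz
  by_contra hne
  obtain ⟨m, hm⟩ := Do_nonempty
  have hcont : Continuous (fun ε : ℝ => m + ε • z) := by fun_prop
  have hn : ∀ᶠ ε in nhds (0:ℝ), m + ε • z ∈ Do :=
    hcont.continuousAt.eventually_mem (by simpa using Do_open.mem_nhds hm)
  obtain ⟨ε, hε, hε0⟩ := ((hn.filter_mono nhdsWithin_le_nhds).and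
    (self_mem_nhdsWithin (s := {(0:ℝ)}ᶜ))).exists
  have h1 := h.q_le i (Do_sub hm) (Do_sub hε)
  have h2 : f i (m + ε • z) = f i m := by simp [hz]
  rw [h2, edist_self] at h1
  have h3 := hq _ _ (le_antisymm h1 zero_le)
  have h4 := T.inj_int i hm hε h3
  have h5 : ε • z = 0 := by simpa using h4
  rcases smul_eq_zero.1 h5 with h6 | h6
  · exact hε0 h6
  · exact hne h6

lemma HL.glue_dist (h : HL T f q) {i j : Fin n} {e e' : Set E2} (he : e ∈ E0) (he' : e' ∈ E0)
    {A : E2 →ᵃ[ℝ] E2} (hA : A '' e = e') (hA' : ∀ x ∈ e, T.σ j (A x) = T.σ i x)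
    {x y : E2} (hx : x ∈ e) (hy : y ∈ e) :
    dist (f i x) (f i y) = dist (f j (A x)) (f j (A y)) := by
  have hAx : A x ∈ e' := hA ▸ mem_image_of_mem _ hx
  have hAy : A y ∈ e' := hA ▸ mem_image_of_mem _ hy
  have h1 := h.seg i (edge_sub he hx) (edge_sub he hy) le_rfl zero_le_one le_rfl
  have h2 := h.seg j (edge_sub he' hAx) (edge_sub he' hAy) le_rfl zero_le_one le_rfl
  have h3 : eVariationOn (q ∘ T.σ i ∘ AffineMap.lineMap x y) (Icc (0:ℝ) 1) =
      eVariationOn (q ∘ T.σ j ∘ AffineMap.lineMap (A x) (A y)) (Icc (0:ℝ) 1) := by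
    apply eVariationOn.congr
    intro v hv
    simp only [Function.comp]
    rw [← AffineMap.apply_lineMap, hA' _ (lineMap_mem (edge_convex he) hx hy hv)]
  rw [h1, h2, ENNReal.ofReal_eq_ofReal_iff (by simp) (by simp)] at h3
  simpa using h3

end

/-! ### Topology of the triangulation -/

def Vs (T : Triangulation S n) : Set S := ⋃ i, T.σ i '' V0

lemma Vs_finite (T : Triangulation S n) : (Vs T).Finite :=
  Set.finite_iUnion fun _ => V0_finite.image _

lemma notDo (T : Triangulation S n) {x : E2} (hx : x ∈ Dtri) (hx' : x ∉ Do) (i j : Fin n) :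
    T.σ i x ∉ T.σ j '' Do := by
  intro hcon
  rcases Dtri_cases hx with h | h | ⟨e, he, h⟩
  · exact hx' h
  · exact Set.disjoint_left.1 (T.disj_vert_int j) (mem_iUnion.2 ⟨i, mem_image_of_mem _ h⟩) hcon
  · exact Set.disjoint_left.1 (T.disj_int_edge j i e he) hcon (mem_image_of_mem _ h)

lemma notEo (T : Triangulation S n) {x : E2} {e : Set E2} (he : e ∈ E0) (hx : x ∈ V0)
    (i j : Fin n) : T.σ i x ∉ T.σ j '' eo e := by
  intro hcon
  exact Set.disjoint_left.1 (T.disj_vert_edge j e he) (mem_iUnion.2 ⟨i, mem_image_of_mem _ hx⟩) hcon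

lemma cover' (T : Triangulation S n) (p : S) : p ∈ Vs T ∨ (∃ i, p ∈ T.σ i '' Do) ∨
    ∃ i, ∃ e ∈ E0, p ∈ T.σ i '' eo e := by
  have : p ∈ (univ : Set S) := mem_univ p
  rw [← T.cover] at this
  rcases this with (h | h) | h
  · exact Or.inl h
  · exact Or.inr (Or.inl (mem_iUnion.1 h))
  · simp only [mem_iUnion] at h
    obtain ⟨i, e, he, h⟩ := h
    exact Or.inr (Or.inr ⟨i, e, he, h⟩)

lemma coverD (T : Triangulation S n) (p : S) : ∃ i, p ∈ T.σ i '' Dtri := by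
  rcases cover' T p with h | ⟨i, h⟩ | ⟨i, e, he, h⟩
  · obtain ⟨i, h⟩ := mem_iUnion.1 h
    exact ⟨i, image_mono V0_sub h⟩
  · exact ⟨i, image_mono Do_sub h⟩
  · exact ⟨i, image_mono (sdiff_subset.trans (edge_sub he)) h⟩

lemma Do_im_open [T2Space S] (T : Triangulation S n) (i : Fin n) : IsOpen (T.σ i '' Do) := by
  have hcl : IsClosed ((⋃ j ∈ {j : Fin n | j ≠ i}, T.σ j '' Dtri) ∪ T.σ i '' (Dtri \ Do)) := by
    apply IsClosed.union
    · apply Set.Finite.isClosed_biUnion (Set.toFinite _)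
      intro j _
      exact (Dtri_compact.image_of_continuousOn (T.continuousOn j)).isClosed
    · exact ((Dtri_compact.diff Do_open).image_of_continuousOn
        ((T.continuousOn i).mono sdiff_subset)).isClosed
  convert hcl.isOpen_compl using 1
  ext p
  simp only [mem_compl_iff, mem_union, mem_iUnion, not_or, not_exists]
  constructor
  · intro hp
    refine ⟨?_, ?_⟩
    · rintro j hj ⟨x, hx, rfl⟩
      by_cases hxo : x ∈ Do
      · exact Set.disjoint_left.1 (T.disj_int j i hj) (mem_image_of_mem _ hxo) hp
      · exact notDo T hx hxo j i hp
    · rintro ⟨x, ⟨hx, hxo⟩, rfl⟩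
      exact notDo T hx hxo i i hp
  · rintro ⟨h1, h2⟩
    obtain ⟨j, x, hx, rfl⟩ := coverD T p
    by_cases hj : j = i
    · subst hj
      by_contra hcon
      exact h2 ⟨x, ⟨hx, fun h => hcon ⟨x, h, rfl⟩⟩, rfl⟩
    · exact absurd ⟨x, hx, rfl⟩ (h1 j hj)

lemma HL.gap [T2Space S] {T : Triangulation S n} {f : Fin n → E2 →ₗ[ℝ] E2} {Y : Type}
    [PseudoEMetricSpace Y] {q : S → Y} (h : HL T f q) {γ : ℝ → S} {α β : ℝ} (hαβ : α < β)
    (hγ : ContinuousOn γ (Icc α β)) (hint : ∀ t ∈ Ioo α β, ∃ j, γ t ∈ T.σ j '' Do) :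
    ∃ j, ∃ x ∈ Dtri, ∃ y ∈ Dtri, T.σ j x = γ α ∧ T.σ j y = γ β ∧
      edist (f j x) (f j y) ≤ eVariationOn (q ∘ γ) (Icc α β) := by
  have hγo : ContinuousOn γ (Ioo α β) := hγ.mono Ioo_subset_Icc_self
  have hmid : (α + β) / 2 ∈ Ioo α β := ⟨by linarith, by linarith⟩
  obtain ⟨j, hj⟩ := hint _ hmid
  have hall : γ '' Ioo α β ⊆ T.σ j '' Do := by
    have hpre : IsPreconnected (γ '' Ioo α β) := isPreconnected_Ioo.image _ hγo
    refine hpre.subset_left_of_subset_union (v := ⋃ k ∈ {k : Fin n | k ≠ j}, T.σ k '' Do)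
      (Do_im_open T j) (isOpen_biUnion fun k _ => Do_im_open T k) ?_ ?_ ?_
    · rw [Set.disjoint_iUnion₂_right]
      intro k hk
      exact T.disj_int j k (Ne.symm hk)
    · rintro _ ⟨t, ht, rfl⟩
      obtain ⟨k, hk⟩ := hint t ht
      by_cases hkj : k = j
      · exact Or.inl (hkj ▸ hk)
      · exact Or.inr (mem_iUnion₂.2 ⟨k, hkj, hk⟩)
    · exact ⟨_, ⟨_, hmid, rfl⟩, hj⟩
  obtain ⟨g, hg, hg'⟩ := lift_cont Dtri_compact (T.continuousOn j) Do_sub (T.inj_int j)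
    (fun x hx hx' => notDo T hx hx' j j) hγo (fun t ht => hall ⟨t, ht, rfl⟩)
  -- sequences
  set a : ℕ → ℝ := fun k => α + (β - α) / (k + 3) with ha
  set b : ℕ → ℝ := fun k => β - (β - α) / (k + 3) with hb
  have hfr : ∀ k : ℕ, 0 < (β - α) / ((k:ℝ) + 3) ∧ (β - α) / ((k:ℝ) + 3) < (β - α) / 2 := by
    intro k
    have : (0:ℝ) ≤ k := Nat.cast_nonneg k
    refine ⟨by apply div_pos <;> linarith, ?_⟩
    apply div_lt_div_of_pos_left <;> linarith
  have hlim : Filter.Tendsto (fun k : ℕ => (β - α) / ((k:ℝ) + 3)) Filter.atTop (nhds 0) := by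
    apply Filter.Tendsto.const_div_atTop
    exact Filter.tendsto_atTop_add_const_right _ _ tendsto_natCast_atTop_atTop
  have haI : ∀ k, a k ∈ Ioo α β := fun k => by
    have := hfr k
    exact ⟨by simp only [ha]; linarith, by simp only [ha]; linarith⟩
  have hbI : ∀ k, b k ∈ Ioo α β := fun k => by
    have := hfr k
    exact ⟨by simp only [hb]; linarith, by simp only [hb]; linarith⟩
  have hab : ∀ k, a k ≤ b k := fun k => by
    have := hfr k
    simp only [ha, hb]; linarith
  have hat : Filter.Tendsto a Filter.atTop (nhds α) := by simpa using hlim.const_add α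
  have hbt : Filter.Tendsto b Filter.atTop (nhds β) := by simpa using hlim.const_sub β
  have hle : ∀ k, edist (f j (g (a k))) (f j (g (b k))) ≤ eVariationOn (q ∘ γ) (Icc α β) := by
    intro k
    have hsub : Icc (a k) (b k) ⊆ Ioo α β := fun t ht =>
      ⟨(haI k).1.trans_le ht.1, ht.2.trans_lt (hbI k).2⟩
    have h1 := eVariationOn.edist_le (f j ∘ g) (left_mem_Icc.2 (hab k)) (right_mem_Icc.2 (hab k))
    rw [h j _ _ g (hab k) (hg.mono hsub) (fun u hu => Do_sub (hg' u (hsub hu)).1)] at h1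
    refine h1.trans ?_
    rw [eVariationOn.congr (g := q ∘ γ) (fun t ht => by
      simp only [Function.comp]; rw [(hg' t (hsub ht)).2])]
    exact eVariationOn.mono _ (hsub.trans Ioo_subset_Icc_self)
  obtain ⟨⟨x, y⟩, ⟨hx, hy⟩, φ, hφ, hlimφ⟩ := (Dtri_compact.prod Dtri_compact).tendsto_subseq
    (x := fun k => (g (a k), g (b k)))
    (fun k => ⟨Do_sub (hg' _ (haI k)).1, Do_sub (hg' _ (hbI k)).1⟩)
  rw [nhds_prod_eq, Filter.tendsto_prod_iff'] at hlimφ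
  obtain ⟨hlx, hly⟩ := hlimφ
  simp only [Function.comp_def] at hlx hly
  have gen : ∀ (c : ℕ → ℝ) (t : ℝ) (z : E2), (∀ k, c k ∈ Ioo α β) → t ∈ Icc α β →
      Filter.Tendsto c Filter.atTop (nhds t) → z ∈ Dtri →
      Filter.Tendsto (fun k => g (c (φ k))) Filter.atTop (nhds z) → T.σ j z = γ t := by
    intro c t z hc ht hct hz hcz
    have t1 : Filter.Tendsto (fun k => T.σ j (g (c (φ k)))) Filter.atTop (nhds (T.σ j z)) :=
      (T.continuousOn j z hz).tendsto.comp (tendsto_nhdsWithin_iff.2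
        ⟨hcz, Filter.Eventually.of_forall fun k => Do_sub (hg' _ (hc _)).1⟩)
    have t2 : Filter.Tendsto (fun k => γ (c (φ k))) Filter.atTop (nhds (γ t)) :=
      (hγ t ht).tendsto.comp (tendsto_nhdsWithin_iff.2
        ⟨hct.comp hφ.tendsto_atTop,
          Filter.Eventually.of_forall fun k => Ioo_subset_Icc_self (hc _)⟩)
    have t3 : (fun k => T.σ j (g (c (φ k)))) = fun k => γ (c (φ k)) := by
      funext k; exact (hg' _ (hc _)).2
    rw [t3] at t1
    exact tendsto_nhds_unique t1 t2
  refine ⟨j, x, hx, y, hy, gen a α x haI (left_mem_Icc.2 hαβ.le) hat hx hlx,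
    gen b β y hbI (right_mem_Icc.2 hαβ.le) hbt hy hly, ?_⟩
  have hc1 := ((lin_cont (f j)).tendsto x).comp hlx
  have hc2 := ((lin_cont (f j)).tendsto y).comp hly
  exact le_of_tendsto (hc1.edist hc2) (Filter.Eventually.of_forall fun k => hle _)

/-! ### Local analysis near an edge -/

section
variable {T : Triangulation S n} {f : Fin n → E2 →ₗ[ℝ] E2} {Y : Type} [PseudoEMetricSpace Y]
  {q : S → Y}

lemma HL.edge_nbhd [CompactSpace S] [T2Space S] (h : HL T f q)
    (hq : ∀ x y, edist (q x) (q y) = 0 → x = y)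
    (i : Fin n) {e : Set E2} (he : e ∈ E0) {x0 : E2} (hx0 : x0 ∈ eo e) :
    ∃ N : Set S, IsOpen N ∧ T.σ i x0 ∈ N ∧
      (∀ p ∈ N, p ∈ T.σ i '' eo e ∨ ∃ j, p ∈ T.σ j '' Do) ∧
      (∀ j, ∀ x' ∈ Dtri, ∀ y' ∈ Dtri, ∀ x ∈ eo e, ∀ y ∈ eo e, T.σ j x' = T.σ i x →
        T.σ j y' = T.σ i y → T.σ i x ∈ N → T.σ i y ∈ N →
        dist (f i x) (f i y) ≤ dist (f j x') (f j y')) := by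
  have hpV : T.σ i x0 ∈ (Vs T)ᶜ := fun hcon =>
    Set.disjoint_left.1 (T.disj_vert_edge i e he) hcon (mem_image_of_mem _ hx0)
  obtain ⟨N0, hN0, hN0c, hN0s⟩ := exists_mem_nhds_isClosed_subset
    ((Vs_finite T).isClosed.isOpen_compl.mem_nhds hpV)
  have hcj : ∀ j : Fin n, ∀ e1 ∈ E0, ∀ e2 ∈ E0, ∀ᶠ c in nhdsWithin (0:ℝ) (Ioi 0),
      e1 ≠ e2 → ∀ x ∈ e1, ∀ y ∈ e2, T.σ j x ∈ N0 → T.σ j y ∈ N0 →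
      c ≤ dist (f j x) (f j y) := by
    intro j e1 he1 e2 he2
    have hcomp : ∀ e ∈ E0, IsCompact (e ∩ T.σ j ⁻¹' N0) := fun e he =>
      (edge_compact he).of_isClosed_subset
        (((T.continuousOn j).mono (edge_sub he)).preimage_isClosed_of_isClosed
          (edge_compact he).isClosed hN0c) inter_subset_left
    by_cases hne : ((e1 ∩ T.σ j ⁻¹' N0) ×ˢ (e2 ∩ T.σ j ⁻¹' N0)).Nonempty ∧ e1 ≠ e2
    · obtain ⟨hne, hne12⟩ := hne
      have hcf : Continuous (fun z : E2 × E2 => dist (f j z.1) (f j z.2)) :=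
        ((lin_cont (f j)).comp continuous_fst).dist ((lin_cont (f j)).comp continuous_snd)
      obtain ⟨⟨x1, y1⟩, hz, hmin⟩ := ((hcomp e1 he1).prod (hcomp e2 he2)).exists_isMinOn hne
        hcf.continuousOn
      obtain ⟨⟨hx1, hx1N⟩, ⟨hy1, hy1N⟩⟩ := hz
      simp only at hx1 hx1N hy1 hy1N
      have hpos : 0 < dist (f j x1) (f j y1) := by
        rw [dist_pos]
        intro hcon
        have hxy := h.inj hq j hcon
        subst hxy
        have := edge_inter he1 he2 hne12 hx1 hy1
        exact hN0s hx1N (mem_iUnion.2 ⟨j, mem_image_of_mem _ this⟩)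
      filter_upwards [Ioo_mem_nhdsGT hpos] with c hc _ x hx y hy hxN hyN
      have hle : dist (f j x1) (f j y1) ≤ dist (f j x) (f j y) :=
        isMinOn_iff.1 hmin (x, y) ⟨⟨hx, hxN⟩, ⟨hy, hyN⟩⟩
      exact hc.2.le.trans hle
    · refine Filter.Eventually.of_forall fun c h12 x hx y hy hxN hyN => ?_
      exact absurd ⟨⟨(x, y), ⟨hx, hxN⟩, ⟨hy, hyN⟩⟩, h12⟩ hne
  have hall : ∀ᶠ c in nhdsWithin (0:ℝ) (Ioi 0), ∀ j : Fin n, ∀ e1 ∈ E0, ∀ e2 ∈ E0,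
      e1 ≠ e2 → ∀ x ∈ e1, ∀ y ∈ e2, T.σ j x ∈ N0 → T.σ j y ∈ N0 →
      c ≤ dist (f j x) (f j y) := by
    rw [Filter.eventually_all]
    intro j
    rw [Filter.eventually_all_finite E0_finite]
    intro e1 he1
    rw [Filter.eventually_all_finite E0_finite]
    intro e2 he2
    exact hcj j e1 he1 e2 he2
  obtain ⟨c, hc, hcpos⟩ := (hall.and self_mem_nhdsWithin).exists
  have hcpos : 0 < c := hcpos
  set W : Set E2 := {x | dist (f i x) (f i x0) < c / 2} with hW
  have hWo : IsOpen W := isOpen_lt ((lin_cont (f i)).dist continuous_const) continuous_const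
  have hF1 : IsClosed (T.σ i '' (e \ W)) :=
    (((edge_compact he).diff hWo).image_of_continuousOn
      ((T.continuousOn i).mono (sdiff_subset.trans (edge_sub he)))).isClosed
  have hF2 : IsClosed (⋃ j : Fin n, ⋃ e' ∈ {e' | e' ∈ E0 ∧ T.σ j '' eo e' ≠ T.σ i '' eo e},
      T.σ j '' e') := by
    apply isClosed_iUnion_of_finite
    intro j
    apply Set.Finite.isClosed_biUnion (E0_finite.subset fun e' he' => he'.1)
    intro e' he'
    exact ((edge_compact he'.1).image_of_continuousOn
      ((T.continuousOn j).mono (edge_sub he'.1))).isClosed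
  have hsame : ∀ j, ∀ x' ∈ Dtri, ∀ x ∈ eo e, T.σ j x' = T.σ i x →
      ∃ e' ∈ E0, x' ∈ eo e' ∧ T.σ j '' eo e' = T.σ i '' eo e := by
    intro j x' hx' x hx hxx
    rcases Dtri_cases hx' with h1 | h1 | ⟨e', he', h1⟩
    · exact absurd (mem_image_of_mem (T.σ i) hx)
        (Set.disjoint_left.1 (T.disj_int_edge j i e he) (hxx ▸ mem_image_of_mem _ h1))
    · exact absurd (hxx ▸ mem_image_of_mem (T.σ i) hx) (notEo T he h1 j i)
    · refine ⟨e', he', h1, ?_⟩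
      rcases T.edge_eq_or_disjoint j i e' he' e he with h2 | h2
      · exact h2
      · exact absurd (mem_image_of_mem (T.σ i) hx)
          (Set.disjoint_left.1 h2 (hxx ▸ mem_image_of_mem _ h1))
  refine ⟨interior N0 ∩ (T.σ i '' (e \ W))ᶜ ∩ (⋃ j : Fin n,
    ⋃ e' ∈ {e' | e' ∈ E0 ∧ T.σ j '' eo e' ≠ T.σ i '' eo e}, T.σ j '' e')ᶜ,
    (isOpen_interior.inter hF1.isOpen_compl).inter hF2.isOpen_compl,
    ⟨⟨mem_interior_iff_mem_nhds.2 hN0, ?_⟩, ?_⟩, ?_, ?_⟩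
  · rintro ⟨x, ⟨hx, hxW⟩, hxx⟩
    have hxe : x ∈ eo e := ⟨hx, fun hv => notEo T he hv i i (hxx ▸ mem_image_of_mem _ hx0)⟩
    have := T.inj_edge i e he hxe hx0 hxx
    subst this
    exact hxW (by simp [hW, hcpos])
  · intro hcon
    simp only [mem_iUnion] at hcon
    obtain ⟨j, e', ⟨he', hne⟩, x', hx', hxx⟩ := hcon
    obtain ⟨e'', he'', hx'', heq⟩ := hsame j x' (edge_sub he' hx') x0 hx0 hxx
    have : e' = e'' := by
      by_contra h1
      exact hx''.2 (edge_inter he' he'' h1 hx' hx''.1)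
    subst this
    exact hne heq
  · rintro p ⟨⟨hp1, hp2⟩, hp3⟩
    rcases cover' T p with h1 | h1 | ⟨j, e', he', h1⟩
    · exact absurd h1 (hN0s (interior_subset hp1))
    · exact Or.inr h1
    · left
      by_contra hcon
      apply hp3
      simp only [mem_iUnion]
      refine ⟨j, e', ⟨he', fun heq => hcon (heq ▸ h1)⟩, image_mono sdiff_subset h1⟩
  · rintro j x' hx' y' hy' x hx y hy hxx hyy ⟨⟨hxN, hxW⟩, -⟩ ⟨⟨hyN, hyW⟩, -⟩
    obtain ⟨e1, he1, hx1, heq1⟩ := hsame j x' hx' x hx hxx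
    obtain ⟨e2, he2, hy1, heq2⟩ := hsame j y' hy' y hy hyy
    by_cases h12 : e1 = e2
    · subst h12
      obtain ⟨A, hA, hA'⟩ := T.glue j i e1 he1 e he heq1
      have hlift : ∀ z' ∈ eo e1, ∀ z ∈ eo e, T.σ j z' = T.σ i z → A z' = z := by
        intro z' hz' z hz hzz
        have hAe : A z' ∈ e := hA ▸ mem_image_of_mem _ hz'.1
        have hs : T.σ i (A z') = T.σ i z := by rw [hA' z' hz'.1, hzz]
        refine T.inj_edge i e he ⟨hAe, fun hv => ?_⟩ hz hs
        exact notEo T he hv i i (hs ▸ mem_image_of_mem _ hz)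
      rw [h.glue_dist he1 he hA hA' hx1.1 hy1.1, hlift x' hx1 x hx hxx, hlift y' hy1 y hy hyy]
    · have h1 := hc j e1 he1 e2 he2 h12 x' hx1.1 y' hy1.1
        (by rw [hxx]; exact interior_subset hxN) (by rw [hyy]; exact interior_subset hyN)
      have hxW' : x ∈ W := by
        by_contra hcon
        exact hxW ⟨x, ⟨hx.1, hcon⟩, rfl⟩
      have hyW' : y ∈ W := by
        by_contra hcon
        exact hyW ⟨y, ⟨hy.1, hcon⟩, rfl⟩
      have h2 : dist (f i x) (f i x0) < c / 2 := hxW'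
      have h3 : dist (f i y) (f i x0) < c / 2 := hyW'
      have h4 := dist_triangle_right (f i x) (f i y) (f i x0)
      linarith

lemma HL.edge_aux (h : HL T f q) (i : Fin n) {u w : E2} (hu : u ∈ Dtri) (hw : w ∈ Dtri)
    {γ : ℝ → S} {K : Set ℝ} (hK : IsClosed K) {a b : ℝ} (aK : a ∈ K) (bK : b ∈ K)
    (hKs : K ⊆ Icc a b) (c : ℝ → ℝ) (hc : ContinuousOn c K) (hcI : ∀ t ∈ K, c t ∈ Icc (0:ℝ) 1)
    (hγ : ∀ t ∈ K, γ t = T.σ i (AffineMap.lineMap u w (c t)))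
    (hgap : ∀ α ∈ K, ∀ β ∈ K, α < β → (∀ t ∈ K, α < t → t < β → False) →
      ENNReal.ofReal (dist (f i u) (f i w) * |c β - c α|) ≤ eVariationOn (q ∘ γ) (Icc α β))
    (hfin : eVariationOn (q ∘ γ) (Icc a b) ≠ ⊤) (hle : c a ≤ c b) :
    ENNReal.ofReal (dist (f i u) (f i w) * |c b - c a|) ≤ eVariationOn (q ∘ γ) (Icc a b) := by
  have hfin' : ∀ s t, a ≤ s → t ≤ b → eVariationOn (q ∘ γ) (Icc s t) ≠ ⊤ := fun s t hs ht =>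
    ne_top_of_le_ne_top hfin (eVariationOn.mono _ (Icc_subset_Icc hs ht))
  set ℓ : ℝ → ℝ := fun t => (eVariationOn (q ∘ γ) (Icc a t)).toReal with hℓ
  have hdiff : ∀ s ∈ K, ∀ t ∈ K, s ≤ t → ℓ t - ℓ s = (eVariationOn (q ∘ γ) (Icc s t)).toReal := by
    intro s hs t ht hst
    have h1 := ev_add (q ∘ γ) (hKs hs).1 hst
    simp only [hℓ]
    rw [← h1, ENNReal.toReal_add (hfin' _ _ le_rfl (hKs hs).2) (hfin' _ _ (hKs hs).1 (hKs ht).2)]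
    ring
  have hof : ∀ s ∈ K, ∀ t ∈ K, s ≤ t →
      ENNReal.ofReal (ℓ t - ℓ s) = eVariationOn (q ∘ γ) (Icc s t) := by
    intro s hs t ht hst
    rw [hdiff s hs t ht hst, ENNReal.ofReal_toReal (hfin' _ _ (hKs hs).1 (hKs ht).2)]
  have hab := (hKs aK).2
  have main := oneD (q ∘ T.σ i ∘ AffineMap.lineMap u w) (q ∘ γ) ℓ c (dist (f i u) (f i w))
    dist_nonneg K hK a b aK bK hKs hc (fun t ht => by simp [hγ t ht]) ?_ ?_ ?_ hcI hle
  · rw [hof a aK b bK hab, h.seg i hu hw (hcI a aK).1 hle (hcI b bK).2] at main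
    rwa [abs_of_nonneg (by linarith)]
  · intro s hs t ht hst
    refine ⟨?_, ?_⟩
    · have := hdiff s hs t ht hst
      have h2 : 0 ≤ (eVariationOn (q ∘ γ) (Icc s t)).toReal := ENNReal.toReal_nonneg
      linarith
    · rw [hof s hs t ht hst]
      exact eVariationOn.edist_le _ (left_mem_Icc.2 hst) (right_mem_Icc.2 hst)
  · intro α hα β hβ hαβ hno
    rcases hαβ.eq_or_lt with rfl | hlt
    · simp
    · rw [hdiff α hα β hβ hαβ]
      exact (ENNReal.ofReal_le_iff_le_toReal (hfin' _ _ (hKs hα).1 (hKs hβ).2)).1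
        (hgap α hα β hβ hlt hno)
  · intro s hs t ht
    have := h.q_le i (lineMap_mem Dtri_convex hu hw hs) (lineMap_mem Dtri_convex hu hw ht)
    rwa [lin_seg_edist] at this

lemma HL.edge (h : HL T f q) [T2Space S] (i : Fin n) {e : Set E2} (he : e ∈ E0) {N : Set S}
    (hN1 : ∀ p ∈ N, p ∈ T.σ i '' eo e ∨ ∃ j, p ∈ T.σ j '' Do)
    (hN2 : ∀ j, ∀ x' ∈ Dtri, ∀ y' ∈ Dtri, ∀ x ∈ eo e, ∀ y ∈ eo e, T.σ j x' = T.σ i x →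
        T.σ j y' = T.σ i y → T.σ i x ∈ N → T.σ i y ∈ N →
        dist (f i x) (f i y) ≤ dist (f j x') (f j y'))
    {γ : ℝ → S} {K : Set ℝ} (hK : IsClosed K) {a b : ℝ} (aK : a ∈ K) (bK : b ∈ K)
    (hKs : K ⊆ Icc a b) (hγ : ContinuousOn γ (Icc a b)) (hγN : ∀ t ∈ Icc a b, γ t ∈ N)
    (hKe : ∀ t ∈ K, γ t ∈ T.σ i '' eo e) (hKe' : ∀ t ∈ Icc a b, t ∉ K → ∃ j, γ t ∈ T.σ j '' Do) :
    ∃ x ∈ Dtri, ∃ y ∈ Dtri, T.σ i x = γ a ∧ T.σ i y = γ b ∧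
      edist (f i x) (f i y) ≤ eVariationOn (q ∘ γ) (Icc a b) := by
  obtain ⟨u, hu, w, hw, hseg, huw⟩ := edge_seg he
  have hmem : ∀ v ∈ Icc (0:ℝ) 1, AffineMap.lineMap u w v ∈ e := by
    intro v hv
    rw [hseg, segment_eq_image_lineMap]; exact ⟨v, hv, rfl⟩
  have hLinj : Function.Injective (fun v : ℝ => (AffineMap.lineMap u w v : E2)) :=
    AffineMap.lineMap_injective ℝ huw
  obtain ⟨c, hc, hc'⟩ := lift_cont (σ := fun v : ℝ => T.σ i (AffineMap.lineMap u w v))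
    (C := Icc (0:ℝ) 1) (O := {v | v ∈ Icc (0:ℝ) 1 ∧ AffineMap.lineMap u w v ∈ eo e})
    isCompact_Icc ((T.continuousOn i).comp (lineMap_contOn u w _)
      (fun v hv => edge_sub he (hmem v hv))) (fun v hv => hv.1)
    (fun v hv v' hv' hvv => hLinj (T.inj_edge i e he hv.2 hv'.2 hvv))
    (fun v hv hv' hcon => by
      obtain ⟨v', ⟨_, h1⟩, h2⟩ := hcon
      refine hv' ⟨hv, hmem v hv, fun hV => notEo T he hV i i (?_ : _ ∈ T.σ i '' eo e)⟩
      simp only at h2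
      rw [← h2]; exact mem_image_of_mem _ h1)
    (hγ.mono hKs) (fun t ht => by
      obtain ⟨x, hx, hxx⟩ := hKe t ht
      have hxe := hx.1
      rw [hseg, segment_eq_image_lineMap] at hxe
      obtain ⟨v, hv, rfl⟩ := hxe
      exact ⟨v, ⟨hv, hx⟩, hxx⟩)
  have huD := V0_sub hu
  have hwD := V0_sub hw
  by_cases hfin : eVariationOn (q ∘ γ) (Icc a b) = ⊤
  · exact ⟨_, edge_sub he (hmem _ (hc' a aK).1.1), _, edge_sub he (hmem _ (hc' b bK).1.1),
      (hc' a aK).2, (hc' b bK).2, by rw [hfin]; exact le_top⟩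
  have hgap : ∀ α ∈ K, ∀ β ∈ K, α < β → (∀ t ∈ K, α < t → t < β → False) →
      ENNReal.ofReal (dist (f i u) (f i w) * |c β - c α|) ≤ eVariationOn (q ∘ γ) (Icc α β) := by
    intro α hα β hβ hαβ hno
    have hsub : Icc α β ⊆ Icc a b := Icc_subset_Icc (hKs hα).1 (hKs hβ).2
    obtain ⟨j, x', hx', y', hy', hxx, hyy, hle⟩ := h.gap hαβ (hγ.mono hsub) (fun t ht =>
      hKe' t (hsub (Ioo_subset_Icc_self ht)) (fun htK => hno t htK ht.1 ht.2))
    refine le_trans ?_ hle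
    rw [← lin_seg_edist, edist_dist, edist_dist]
    apply ENNReal.ofReal_le_ofReal
    refine hN2 j x' hx' y' hy' _ (hc' α hα).1.2 _ (hc' β hβ).1.2 (hxx.trans (hc' α hα).2.symm)
      (hyy.trans (hc' β hβ).2.symm) ?_ ?_
    · have : T.σ i (AffineMap.lineMap u w (c α)) = γ α := (hc' α hα).2
      rw [this]; exact hγN _ (hKs hα)
    · have : T.σ i (AffineMap.lineMap u w (c β)) = γ β := (hc' β hβ).2
      rw [this]; exact hγN _ (hKs hβ)
  refine ⟨_, edge_sub he (hmem _ (hc' a aK).1.1), _, edge_sub he (hmem _ (hc' b bK).1.1),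
      (hc' a aK).2, (hc' b bK).2, ?_⟩
  rw [lin_seg_edist]
  rcases le_total (c a) (c b) with hle | hle
  · exact h.edge_aux i huD hwD hK aK bK hKs c hc (fun t ht => (hc' t ht).1.1)
      (fun t ht => (hc' t ht).2.symm) hgap hfin hle
  · have := h.edge_aux i hwD huD hK aK bK hKs (fun t => 1 - c t) (continuousOn_const.sub hc)
      (fun t ht => ⟨by linarith [(hc' t ht).1.1.2], by linarith [(hc' t ht).1.1.1]⟩)
      (fun t ht => by rw [AffineMap.lineMap_apply_one_sub]; exact (hc' t ht).2.symm)
      (fun α hα β hβ hαβ hno => by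
        have := hgap α hα β hβ hαβ hno
        rw [dist_comm, abs_sub_comm] at this
        convert this using 4; ring)
      hfin (by show 1 - c a ≤ 1 - c b; linarith)
    rw [dist_comm, abs_sub_comm] at this
    convert this using 4; ring

/-- `P` on an interval. -/
lemma HL.local_edge (h : HL T f q) [T2Space S] (G : S → ℝ)
    (hG : ∀ i, ∀ x ∈ Dtri, ∀ y ∈ Dtri, edist (G (T.σ i x)) (G (T.σ i y)) ≤ edist (f i x) (f i y))
    (i : Fin n) {e : Set E2} (he : e ∈ E0) {N : Set S}
    (hN1 : ∀ p ∈ N, p ∈ T.σ i '' eo e ∨ ∃ j, p ∈ T.σ j '' Do)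
    (hN2 : ∀ j, ∀ x' ∈ Dtri, ∀ y' ∈ Dtri, ∀ x ∈ eo e, ∀ y ∈ eo e, T.σ j x' = T.σ i x →
        T.σ j y' = T.σ i y → T.σ i x ∈ N → T.σ i y ∈ N →
        dist (f i x) (f i y) ≤ dist (f j x') (f j y'))
    {γ : ℝ → S} {a b : ℝ} (hab : a ≤ b) (hγ : ContinuousOn γ (Icc a b))
    (hγN : ∀ t ∈ Icc a b, γ t ∈ N) :
    edist (G (γ a)) (G (γ b)) ≤ eVariationOn (q ∘ γ) (Icc a b) := by
  have hgapP : ∀ s t, a ≤ s → s ≤ t → t ≤ b → (∀ r ∈ Ioo s t, ∃ j, γ r ∈ T.σ j '' Do) →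
      edist (G (γ s)) (G (γ t)) ≤ eVariationOn (q ∘ γ) (Icc s t) := by
    intro s t has hst htb hno
    rcases hst.eq_or_lt with rfl | hlt
    · simp
    obtain ⟨j, x, hx, y, hy, hxx, hyy, hle⟩ := h.gap hlt (hγ.mono (Icc_subset_Icc has htb)) hno
    rw [← hxx, ← hyy]
    exact (hG j x hx y hy).trans hle
  set K : Set ℝ := Icc a b ∩ γ ⁻¹' (T.σ i '' e) with hKdef
  have hKcl : IsClosed K := hγ.preimage_isClosed_of_isClosed isClosed_Icc
    ((edge_compact he).image_of_continuousOn ((T.continuousOn i).mono (edge_sub he))).isClosed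
  have hKe : ∀ t ∈ K, γ t ∈ T.σ i '' eo e := by
    rintro t ⟨ht, x, hx, hxx⟩
    rcases hN1 _ (hγN t ht) with h1 | ⟨j, h1⟩
    · exact h1
    · exfalso
      by_cases hv : x ∈ V0
      · exact Set.disjoint_left.1 (T.disj_vert_int j)
          (mem_iUnion.2 ⟨i, mem_image_of_mem _ hv⟩) (hxx ▸ h1)
      · exact Set.disjoint_left.1 (T.disj_int_edge j i e he) h1
          (hxx ▸ mem_image_of_mem _ ⟨hx, hv⟩)
  have hKe' : ∀ t ∈ Icc a b, t ∉ K → ∃ j, γ t ∈ T.σ j '' Do := by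
    intro t ht htK
    rcases hN1 _ (hγN t ht) with h1 | h1
    · exact absurd ⟨ht, image_mono sdiff_subset h1⟩ htK
    · exact h1
  rcases K.eq_empty_or_nonempty with hemp | hne
  · exact hgapP a b le_rfl hab le_rfl (fun r hr => hKe' r (Ioo_subset_Icc_self hr) (by simp [hemp]))
  have hbb : BddBelow K := ⟨a, fun t ht => ht.1.1⟩
  have hba : BddAbove K := ⟨b, fun t ht => ht.1.2⟩
  set a' := sInf K with ha'
  set b' := sSup K with hb'
  have ha'K : a' ∈ K := hKcl.csInf_mem hne hbb
  have hb'K : b' ∈ K := hKcl.csSup_mem hne hba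
  have hab' : a' ≤ b' := csInf_le hbb hb'K
  have hsub : Icc a' b' ⊆ Icc a b := Icc_subset_Icc ha'K.1.1 hb'K.1.2
  have s1 := hgapP a a' le_rfl ha'K.1.1 ha'K.1.2 (fun r hr =>
    hKe' r ⟨hr.1.le, hr.2.le.trans ha'K.1.2⟩ (fun hrK => absurd (csInf_le hbb hrK) (not_le.2 hr.2)))
  have s3 := hgapP b' b hb'K.1.1 hb'K.1.2 le_rfl (fun r hr =>
    hKe' r ⟨hb'K.1.1.trans hr.1.le, hr.2.le⟩
      (fun hrK => absurd (le_csSup hba hrK) (not_le.2 hr.1)))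
  obtain ⟨x, hx, y, hy, hxx, hyy, hle⟩ := h.edge i he hN1 hN2 hKcl ha'K hb'K
    (fun t ht => ⟨csInf_le hbb ht, le_csSup hba ht⟩) (hγ.mono hsub)
    (fun t ht => hγN t (hsub ht)) hKe (fun t ht => hKe' t (hsub ht))
  have s2 : edist (G (γ a')) (G (γ b')) ≤ eVariationOn (q ∘ γ) (Icc a' b') := by
    rw [← hxx, ← hyy]
    exact (hG i x hx y hy).trans hle
  rw [← ev_add _ ha'K.1.1 ha'K.1.2, ← ev_add _ hab' hb'K.1.2, ← add_assoc]
  exact (edist_triangle4 _ _ _ _).trans (add_le_add (add_le_add s1 s2) s3)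

end

/-! ### Globalization along a curve -/

section
variable {T : Triangulation S n} {f : Fin n → E2 →ₗ[ℝ] E2} {Y : Type} [PseudoEMetricSpace Y]
  {q : S → Y}

lemma HL.point_nbhd [CompactSpace S] [T2Space S] (h : HL T f q)
    (hq : ∀ x y, edist (q x) (q y) = 0 → x = y) (G : S → ℝ)
    (hG : ∀ i, ∀ x ∈ Dtri, ∀ y ∈ Dtri, edist (G (T.σ i x)) (G (T.σ i y)) ≤ edist (f i x) (f i y))
    (p : S) (hp : p ∉ Vs T) :
    ∃ N : Set S, IsOpen N ∧ p ∈ N ∧ ∀ (γ : ℝ → S) (a b : ℝ), a ≤ b → ContinuousOn γ (Icc a b) →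
      (∀ t ∈ Icc a b, γ t ∈ N) →
      edist (G (γ a)) (G (γ b)) ≤ eVariationOn (q ∘ γ) (Icc a b) := by
  rcases cover' T p with h1 | ⟨i, h1⟩ | ⟨i, e, he, x0, hx0, rfl⟩
  · exact absurd h1 hp
  · refine ⟨⋃ j, T.σ j '' Do, isOpen_iUnion fun j => Do_im_open T j, mem_iUnion.2 ⟨i, h1⟩, ?_⟩
    intro γ a b hab hγ hN
    rcases hab.eq_or_lt with rfl | hlt
    · simp
    obtain ⟨j, x, hx, y, hy, hxx, hyy, hle⟩ := h.gap hlt hγ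
      (fun t ht => mem_iUnion.1 (hN t (Ioo_subset_Icc_self ht)))
    rw [← hxx, ← hyy]
    exact (hG j x hx y hy).trans hle
  · obtain ⟨N, hNo, hpN, hN1, hN2⟩ := h.edge_nbhd hq i he hx0
    exact ⟨N, hNo, hpN, fun γ a b hab hγ hN => h.local_edge G hG i he hN1 hN2 hab hγ hN⟩

lemma HL.no_vertex_closed [CompactSpace S] [T2Space S] (h : HL T f q)
    (hq : ∀ x y, edist (q x) (q y) = 0 → x = y) (G : S → ℝ)
    (hG : ∀ i, ∀ x ∈ Dtri, ∀ y ∈ Dtri, edist (G (T.σ i x)) (G (T.σ i y)) ≤ edist (f i x) (f i y))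
    {γ : ℝ → S} {a b : ℝ} (hab : a ≤ b) (hγ : ContinuousOn γ (Icc a b))
    (hV : ∀ t ∈ Icc a b, γ t ∉ Vs T) :
    edist (G (γ a)) (G (γ b)) ≤ eVariationOn (q ∘ γ) (Icc a b) := by
  have hex : ∀ t : Icc a b, _ := fun t => h.point_nbhd hq G hG (γ t) (hV t t.2)
  choose N hNo hN hNP using hex
  have hr : Continuous ((Icc a b).domRestrict γ) := continuousOn_iff_continuous_domRestrict.1 hγ
  obtain ⟨t, ht0, htm, ⟨m, hm⟩, ht⟩ := exists_monotone_Icc_subset_open_cover_Icc hab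
    (c := fun s => (Icc a b).domRestrict γ ⁻¹' N s) (fun s => (hNo s).preimage hr)
    (fun s _ => mem_iUnion.2 ⟨s, hN s⟩)
  have key : ∀ k, edist (G (γ a)) (G (γ (t k))) ≤ eVariationOn (q ∘ γ) (Icc a (t k)) := by
    intro k
    induction k with
    | zero => rw [ht0]; simp
    | succ k ih =>
      obtain ⟨s, hs⟩ := ht k
      have hle : (t k : ℝ) ≤ t (k + 1) := htm (Nat.le_succ k)
      have := hNP s γ (t k) (t (k + 1)) hle
        (hγ.mono (Icc_subset_Icc (t k).2.1 (t (k + 1)).2.2)) (fun u hu =>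
          hs (show (⟨u, (t k).2.1.trans hu.1, hu.2.trans (t (k + 1)).2.2⟩ : Icc a b) ∈
            Icc (t k) (t (k + 1)) from ⟨hu.1, hu.2⟩))
      rw [← ev_add _ (t k).2.1 hle]
      exact (edist_triangle _ _ _).trans (add_le_add ih this)
  have := key m
  rwa [hm m le_rfl] at this

lemma G_cont [T2Space S] (G : S → ℝ)
    (hG : ∀ i, ∀ x ∈ Dtri, ∀ y ∈ Dtri,
      edist (G (T.σ i x)) (G (T.σ i y)) ≤ edist (f i x) (f i y)) : Continuous G := by
  have hGi : ∀ i, ContinuousOn (G ∘ T.σ i) Dtri := by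
    intro i x hx
    rw [ContinuousWithinAt, tendsto_iff_edist_tendsto_0]
    have h1 : Filter.Tendsto (fun y => edist (f i y) (f i x)) (nhdsWithin x Dtri) (nhds 0) :=
      tendsto_iff_edist_tendsto_0.1 ((lin_cont (f i)).continuousAt.continuousWithinAt)
    refine tendsto_of_tendsto_of_tendsto_of_le_of_le' tendsto_const_nhds h1
      (Filter.Eventually.of_forall fun _ => bot_le) ?_
    filter_upwards [self_mem_nhdsWithin] with y hy
    exact hG i y hy x hx
  rw [continuous_iff_isClosed]
  intro C hC
  have : G ⁻¹' C = ⋃ i, T.σ i '' (Dtri ∩ (G ∘ T.σ i) ⁻¹' C) := by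
    ext p
    simp only [mem_iUnion]
    constructor
    · intro hp
      obtain ⟨i, x, hx, rfl⟩ := coverD T p
      exact ⟨i, x, ⟨hx, hp⟩, rfl⟩
    · rintro ⟨i, x, ⟨hx, hp⟩, rfl⟩
      exact hp
  rw [this]
  apply isClosed_iUnion_of_finite
  intro i
  exact ((Dtri_compact.of_isClosed_subset
    ((hGi i).preimage_isClosed_of_isClosed Dtri_compact.isClosed hC)
    inter_subset_left).image_of_continuousOn ((T.continuousOn i).mono inter_subset_left)).isClosed

lemma HL.no_vertex_open [CompactSpace S] [T2Space S] (h : HL T f q)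
    (hq : ∀ x y, edist (q x) (q y) = 0 → x = y) (G : S → ℝ)
    (hG : ∀ i, ∀ x ∈ Dtri, ∀ y ∈ Dtri, edist (G (T.σ i x)) (G (T.σ i y)) ≤ edist (f i x) (f i y))
    {γ : ℝ → S} {a b : ℝ} (hab : a ≤ b) (hγ : ContinuousOn γ (Icc a b))
    (hV : ∀ t ∈ Ioo a b, γ t ∉ Vs T) :
    edist (G (γ a)) (G (γ b)) ≤ eVariationOn (q ∘ γ) (Icc a b) := by
  rcases hab.eq_or_lt with rfl | hlt
  · simp
  have hGγ : ContinuousOn (G ∘ γ) (Icc a b) := (G_cont G hG).comp_continuousOn hγ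
  obtain ⟨m, ham, hmb⟩ := exists_between hlt
  have h1 : edist (G (γ a)) (G (γ m)) ≤ eVariationOn (q ∘ γ) (Icc a m) := by
    have ht : Filter.Tendsto (fun s => edist (G (γ s)) (G (γ m))) (nhdsWithin a (Ioo a m))
        (nhds (edist (G (γ a)) (G (γ m)))) :=
      Filter.Tendsto.edist (((hGγ a (left_mem_Icc.2 hab)).mono
        (Ioo_subset_Icc_self.trans (Icc_subset_Icc_right hmb.le))).tendsto) tendsto_const_nhds
    have : (nhdsWithin a (Ioo a m)).NeBot := left_nhdsWithin_Ioo_neBot ham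
    refine le_of_tendsto ht ?_
    filter_upwards [self_mem_nhdsWithin] with s hs
    refine (h.no_vertex_closed hq G hG hs.2.le (hγ.mono (Icc_subset_Icc hs.1.le hmb.le))
      (fun t ht => hV t ⟨hs.1.trans_le ht.1, ht.2.trans_lt hmb⟩)).trans ?_
    exact eVariationOn.mono _ (Icc_subset_Icc_left hs.1.le)
  have h2 : edist (G (γ m)) (G (γ b)) ≤ eVariationOn (q ∘ γ) (Icc m b) := by
    have ht : Filter.Tendsto (fun s => edist (G (γ m)) (G (γ s))) (nhdsWithin b (Ioo m b))
        (nhds (edist (G (γ m)) (G (γ b)))) :=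
      Filter.Tendsto.edist tendsto_const_nhds (((hGγ b (right_mem_Icc.2 hab)).mono
        (Ioo_subset_Icc_self.trans (Icc_subset_Icc_left ham.le))).tendsto)
    have : (nhdsWithin b (Ioo m b)).NeBot := right_nhdsWithin_Ioo_neBot hmb
    refine le_of_tendsto ht ?_
    filter_upwards [self_mem_nhdsWithin] with s hs
    refine (h.no_vertex_closed hq G hG hs.1.le (hγ.mono (Icc_subset_Icc ham.le hs.2.le))
      (fun t ht => hV t ⟨ham.trans_le ht.1, ht.2.trans_lt hs.2⟩)).trans ?_
    exact eVariationOn.mono _ (Icc_subset_Icc_right hs.2.le)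
  rw [← ev_add _ ham.le hmb.le]
  exact (edist_triangle _ _ _).trans (add_le_add h1 h2)

lemma HL.main [CompactSpace S] [T2Space S] (h : HL T f q)
    (hq : ∀ x y, edist (q x) (q y) = 0 → x = y) (G : S → ℝ)
    (hG : ∀ i, ∀ x ∈ Dtri, ∀ y ∈ Dtri, edist (G (T.σ i x)) (G (T.σ i y)) ≤ edist (f i x) (f i y))
    (γ : ℝ → S) (W : Set S) (hW : W.Finite) :
    ∀ a b : ℝ, a ≤ b → ContinuousOn γ (Icc a b) → (∀ t ∈ Ioo a b, γ t ∈ Vs T → γ t ∈ W) →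
    edist (G (γ a)) (G (γ b)) ≤ eVariationOn (q ∘ γ) (Icc a b) := by
  induction W, hW using Set.Finite.induction_on with
  | empty =>
    intro a b hab hγ hV
    exact h.no_vertex_open hq G hG hab hγ (fun t ht hv => hV t ht hv)
  | @insert v W _ _ ih =>
    intro a b hab hγ hV
    set K : Set ℝ := Icc a b ∩ γ ⁻¹' {v} with hKdef
    have hKcl : IsClosed K := hγ.preimage_isClosed_of_isClosed isClosed_Icc isClosed_singleton
    rcases K.eq_empty_or_nonempty with hemp | hne
    · refine ih a b hab hγ fun t ht hv => (hV t ht hv).resolve_left fun hcon => ?_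
      have : t ∈ K := ⟨Ioo_subset_Icc_self ht, hcon⟩
      rw [hemp] at this
      exact this
    have hbb : BddBelow K := ⟨a, fun t ht => ht.1.1⟩
    have hba : BddAbove K := ⟨b, fun t ht => ht.1.2⟩
    set a' := sInf K with ha'
    set b' := sSup K with hb'
    have ha'K : a' ∈ K := hKcl.csInf_mem hne hbb
    have hb'K : b' ∈ K := hKcl.csSup_mem hne hba
    have hab' : a' ≤ b' := csInf_le hbb hb'K
    have s1 := ih a a' ha'K.1.1 (hγ.mono (Icc_subset_Icc_right ha'K.1.2)) (fun t ht hv =>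
      (hV t ⟨ht.1, ht.2.trans_le ha'K.1.2⟩ hv).resolve_left fun hcon =>
        absurd (csInf_le hbb (show t ∈ K from ⟨⟨ht.1.le, ht.2.le.trans ha'K.1.2⟩, hcon⟩))
          (not_le.2 ht.2))
    have s3 := ih b' b hb'K.1.2 (hγ.mono (Icc_subset_Icc_left hb'K.1.1)) (fun t ht hv =>
      (hV t ⟨hb'K.1.1.trans_lt ht.1, ht.2⟩ hv).resolve_left fun hcon =>
        absurd (le_csSup hba (show t ∈ K from ⟨⟨hb'K.1.1.trans ht.1.le, ht.2.le⟩, hcon⟩))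
          (not_le.2 ht.1))
    have s2 : edist (G (γ a')) (G (γ b')) ≤ eVariationOn (q ∘ γ) (Icc a' b') := by
      have e1 : γ a' = v := ha'K.2
      have e2 : γ b' = v := hb'K.2
      rw [e1, e2]; simp
    rw [← ev_add _ ha'K.1.1 ha'K.1.2, ← ev_add _ hab' hb'K.1.2, ← add_assoc]
    exact (edist_triangle4 _ _ _ _).trans (add_le_add (add_le_add s1 s2) s3)

end

/-! ### Chains and the final comparison -/

lemma exists_lin (l : Set E2 → ℝ) : ∃ f : E2 →ₗ[ℝ] E2, ∀ x y, dD l x y = dist (f x) (f y) := by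
  by_cases h : ∃ f : E2 →ₗ[ℝ] E2, Realizes f l
  · exact ⟨h.choose, fun x y => by simp only [dD, dif_pos h]⟩
  · exact ⟨0, fun x y => by simp only [dD, dif_neg h]; simp⟩

lemma dD_nonneg (l : Set E2 → ℝ) (x y : E2) : 0 ≤ dD l x y := by
  obtain ⟨f, hf⟩ := exists_lin l
  rw [hf]; exact dist_nonneg

lemma dTri_nonneg (T : Triangulation S n) (l : Set S → ℝ) (i : Fin n) (x y : S) :
    0 ≤ dTri T l i x y := by
  apply Real.sInf_nonneg
  rintro r ⟨x', _, y', _, _, _, rfl⟩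
  exact dD_nonneg _ _ _

lemma dTri_le (T : Triangulation S n) (l : Set S → ℝ) (i : Fin n) {x y : E2} (hx : x ∈ Dtri)
    (hy : y ∈ Dtri) : dTri T l i (T.σ i x) (T.σ i y) ≤ dD (lRes T l i) x y := by
  apply csInf_le
  · refine ⟨0, ?_⟩
    rintro r ⟨x', _, y', _, _, _, rfl⟩
    exact dD_nonneg _ _ _
  · exact ⟨x, hx, y, hy, rfl, rfl, rfl⟩

lemma chain_nonneg (T : Triangulation S n) (l : Set S → ℝ) (x y : S) :
    ∀ r ∈ chainSums T l x y, 0 ≤ r := by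
  rintro r ⟨k, c, idx, _, _, _, rfl⟩
  exact Finset.sum_nonneg fun j _ => dTri_nonneg _ _ _ _ _

lemma chain_zero (T : Triangulation S n) (l : Set S → ℝ) (x : S) : (0:ℝ) ∈ chainSums T l x x := by
  obtain ⟨i, _⟩ := coverD T x
  exact ⟨0, fun _ => x, fun _ => i, rfl, rfl, by simp, by simp⟩

lemma chain_ext (T : Triangulation S n) (l : Set S → ℝ) {x p p' : S} {r : ℝ} (i : Fin n)
    (hr : r ∈ chainSums T l x p) (hp : p ∈ T.σ i '' Dtri) (hp' : p' ∈ T.σ i '' Dtri) :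
    r + dTri T l i p p' ∈ chainSums T l x p' := by
  obtain ⟨k, c, idx, h0, hk, hc, rfl⟩ := hr
  refine ⟨k + 1, fun j => if j ≤ k then c j else p', fun j => if j < k then idx j else i,
    by simpa using h0, by simp, ?_, ?_⟩
  · intro j hj
    rcases Nat.lt_succ_iff_lt_or_eq.1 hj with h1 | rfl
    · have h2 : j + 1 ≤ k := h1
      simp only [h1.le, h2, h1, if_true]
      exact hc j h1
    · simp only [le_refl, lt_irrefl, if_true, if_false, Nat.not_succ_le_self]
      exact ⟨hk ▸ hp, hp'⟩
  · rw [Finset.sum_range_succ]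
    congr 1
    · apply Finset.sum_congr rfl
      intro j hj
      have h1 : j < k := Finset.mem_range.1 hj
      have h2 : j + 1 ≤ k := h1
      simp only [h1.le, h2, h1, if_true]
    · simp only [le_refl, lt_irrefl, if_true, if_false, Nat.not_succ_le_self, hk]

lemma chain_nonempty [CompactSpace S] [T2Space S] [ConnectedSpace S] (T : Triangulation S n)
    (l : Set S → ℝ) (x y : S) : (chainSums T l x y).Nonempty := by
  set R : Set S := {y | (chainSums T l x y).Nonempty} with hR
  have hstep : ∀ i, ∀ p ∈ T.σ i '' Dtri, ∀ p' ∈ T.σ i '' Dtri, p ∈ R → p' ∈ R := by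
    rintro i p hp p' hp' ⟨r, hr⟩
    exact ⟨_, chain_ext T l i hr hp hp'⟩
  have hcl : ∀ R : Set S, (∀ i, ∀ p ∈ T.σ i '' Dtri, ∀ p' ∈ T.σ i '' Dtri, p ∈ R → p' ∈ R) →
      IsClosed R := by
    intro R hs
    have : R = ⋃ i ∈ {i : Fin n | T.σ i '' Dtri ⊆ R}, T.σ i '' Dtri := by
      apply Subset.antisymm
      · intro p hp
        obtain ⟨i, hi⟩ := coverD T p
        exact mem_biUnion (show i ∈ {i : Fin n | T.σ i '' Dtri ⊆ R} from
          fun p' hp' => hs i p hi p' hp' hp) hi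
      · exact iUnion₂_subset fun i hi => hi
    rw [this]
    apply Set.Finite.isClosed_biUnion (Set.toFinite _)
    intro j _
    exact (Dtri_compact.image_of_continuousOn (T.continuousOn j)).isClosed
  have hclopen : IsClopen R := ⟨hcl R hstep, isClosed_compl_iff.1 (hcl Rᶜ fun i p hp p' hp' h1 h2 =>
    h1 (hstep i p' hp' p hp h2))⟩
  have : R = univ := hclopen.eq_univ ⟨x, 0, chain_zero T l x⟩
  have hy : y ∈ R := by rw [this]; exact mem_univ y
  exact hy

lemma dGlue_step [CompactSpace S] [T2Space S] [ConnectedSpace S] (T : Triangulation S n)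
    (l : Set S → ℝ) (x : S) (i : Fin n) {x' y' : E2} (hx : x' ∈ Dtri) (hy : y' ∈ Dtri) :
    dGlue T l x (T.σ i y') ≤ dGlue T l x (T.σ i x') + dD (lRes T l i) x' y' := by
  rw [← sub_le_iff_le_add]
  apply le_csInf (chain_nonempty T l x _)
  intro r hr
  rw [sub_le_iff_le_add]
  have h1 : dGlue T l x (T.σ i y') ≤ r + dTri T l i (T.σ i x') (T.σ i y') :=
    csInf_le ⟨0, chain_nonneg T l x _⟩
      (chain_ext T l i hr (mem_image_of_mem _ hx) (mem_image_of_mem _ hy))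
  linarith [dTri_le T l i hx hy]

lemma exists_emetric (d : S → S → ℝ) (h0 : ∀ x, d x x = 0) (hs : ∀ x y : S, d x y = d y x)
    (ht : ∀ x y z : S, d x z ≤ d x y + d y z) (hn : ∀ x y, 0 ≤ d x y) :
    ∃ (Y : Type) (_ : PseudoEMetricSpace Y) (q : S → Y),
      ∀ x y, edist (q x) (q y) = ENNReal.ofReal (d x y) := by
  refine ⟨S, { edist := fun x y => ENNReal.ofReal (d x y)
               edist_self := fun x => by simp [h0]
               edist_comm := fun x y => by rw [hs]
               edist_triangle := fun x y z => ?_ }, id, fun x y => rfl⟩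
  rw [← ENNReal.ofReal_add (hn _ _) (hn _ _)]
  exact ENNReal.ofReal_le_ofReal (ht x y z)

/-- Theorem 4.1 (b): if `d` is an intrinsic metric on `S` such that for
every `i ∈ I` and every continuous curve `γ : [0,1] → Dtri` one has
`L(γ, d[l^{(i)}]) = L(σᵢ ∘ γ, d)`, then `d = d[l]`: the glued metric `d[l]` is the unique
intrinsic metric on `S` preserving the lengths of the curves on the Euclidean triangles. -/
theorem eq_dGlue_of_intrinsic_length_preserving
    {S : Type} [TopologicalSpace S] [CompactSpace S] [T2Space S] [ConnectedSpace S]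
    {n : ℕ} (T : Triangulation S n) (l : Set S → ℝ) (hl : TriIneqT T l)
    (d : S → S → ℝ)
    (hd_eq : ∀ x y : S, d x y = 0 ↔ x = y)
    (hd_symm : ∀ x y : S, d x y = d y x)
    (hd_tri : ∀ x y z : S, d x z ≤ d x y + d y z)
    (hd_intrinsic : ∀ x y : S, ENNReal.ofReal (d x y) =
      ⨅ (γ : ℝ → S) (_ : ContinuousOn γ (Icc (0:ℝ) 1) ∧ γ 0 = x ∧ γ 1 = y),
        pathLen d γ)
    (hL : ∀ i : Fin n, ∀ γ : ℝ → E2,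
      ContinuousOn γ (Icc (0:ℝ) 1) → (∀ t ∈ Icc (0:ℝ) 1, γ t ∈ Dtri) →
      pathLen (dD (lRes T l i)) γ = pathLen d (T.σ i ∘ γ)) :
    ∀ x y : S, d x y = dGlue T l x y := by
  have hn : ∀ x y, 0 ≤ d x y := by
    intro x y
    have h1 := hd_tri x y x
    rw [(hd_eq x x).2 rfl, hd_symm y x] at h1
    linarith
  obtain ⟨Y, _, q, hq⟩ := exists_emetric d (fun x => (hd_eq x x).2 rfl) hd_symm hd_tri hn
  choose f hf using fun i => exists_lin (lRes T l i)
  have hfe : ∀ i x y, edist (f i x) (f i y) = ENNReal.ofReal (dD (lRes T l i) x y) := by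
    intro i x y
    rw [edist_dist, hf]
  have hHL : HL T f q := by
    intro i s t g hst hg hgD
    have hmono : MonotoneOn (fun v : ℝ => AffineMap.lineMap s t v) (Icc (0:ℝ) 1) := by
      intro v _ w _ hvw
      simp only [AffineMap.lineMap_apply_ring']
      nlinarith
    have him : (fun v : ℝ => AffineMap.lineMap s t v) '' Icc (0:ℝ) 1 = Icc s t := by
      rw [← segment_eq_Icc hst, segment_eq_image_lineMap]
    have hmaps : MapsTo (fun v : ℝ => AffineMap.lineMap s t v) (Icc (0:ℝ) 1) (Icc s t) := by
      intro v hv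
      rw [← him]; exact mem_image_of_mem _ hv
    have hcont : ContinuousOn (fun v : ℝ => (AffineMap.lineMap s t v : ℝ)) (Icc (0:ℝ) 1) := by
      fun_prop
    generalize (fun v : ℝ => (AffineMap.lineMap s t v : ℝ)) = φ at hmono him hmaps hcont
    have h1 := hL i (g ∘ φ) (hg.comp hcont hmaps) (fun v hv => hgD _ (hmaps hv))
    have h2 : pathLen (dD (lRes T l i)) (g ∘ φ) = eVariationOn ((f i ∘ g) ∘ φ) (Icc 0 1) :=
      pathLen_eq (dD (lRes T l i)) (g ∘ φ) ((f i ∘ g) ∘ φ) (dD_nonneg (lRes T l i))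
        (fun s t => hfe i (g (φ s)) (g (φ t)))
    have h3 : pathLen d (T.σ i ∘ g ∘ φ) = eVariationOn ((q ∘ T.σ i ∘ g) ∘ φ) (Icc 0 1) :=
      pathLen_eq d (T.σ i ∘ g ∘ φ) ((q ∘ T.σ i ∘ g) ∘ φ) hn
        (fun s t => hq (T.σ i (g (φ s))) (T.σ i (g (φ t))))
    rw [h2, h3, eVariationOn.comp_eq_of_monotoneOn _ _ hmono,
      eVariationOn.comp_eq_of_monotoneOn _ _ hmono, him] at h1
    exact h1
  have hq0 : ∀ x y, edist (q x) (q y) = 0 → x = y := by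
    intro x y h
    rw [hq, ENNReal.ofReal_eq_zero] at h
    exact (hd_eq x y).1 (le_antisymm h (hn x y))
  have hdle : ∀ i, ∀ x ∈ Dtri, ∀ y ∈ Dtri, d (T.σ i x) (T.σ i y) ≤ dD (lRes T l i) x y := by
    intro i x hx y hy
    have := hHL.q_le i hx hy
    rw [hq, hfe] at this
    exact (ENNReal.ofReal_le_ofReal_iff (dD_nonneg _ _ _)).1 this
  intro x y
  apply le_antisymm
  · apply le_csInf (chain_nonempty T l x y)
    rintro r ⟨k, c, idx, rfl, rfl, hc, rfl⟩
    have key : ∀ m ≤ k, d (c 0) (c m) ≤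
        ∑ j ∈ Finset.range m, dTri T l (idx j) (c j) (c (j + 1)) := by
      intro m
      induction m with
      | zero => intro _; simp [(hd_eq (c 0) (c 0)).2 rfl]
      | succ m ih =>
        intro hm
        rw [Finset.sum_range_succ]
        refine (hd_tri _ (c m) _).trans (add_le_add (ih (by omega)) ?_)
        obtain ⟨⟨x1, hx1, e1⟩, ⟨y1, hy1, e2⟩⟩ := hc m (by omega)
        refine le_csInf ⟨dD (lRes T l (idx m)) x1 y1, x1, hx1, y1, hy1, e1, e2, rfl⟩ ?_
        rintro r ⟨x', hx', y', hy', e1, e2, rfl⟩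
        rw [← e1, ← e2]
        exact hdle _ x' hx' y' hy'
    exact key k le_rfl
  · have hG : ∀ i, ∀ x' ∈ Dtri, ∀ y' ∈ Dtri,
        edist (dGlue T l x (T.σ i x')) (dGlue T l x (T.σ i y')) ≤ edist (f i x') (f i y') := by
      intro i x' hx' y' hy'
      rw [edist_dist, hfe]
      apply ENNReal.ofReal_le_ofReal
      have h1 := dGlue_step T l x i hx' hy'
      have h2 := dGlue_step T l x i hy' hx'
      rw [hf, dist_comm, ← hf] at h2
      rw [Real.dist_eq, abs_le]
      constructor <;> linarith
    have hx0 : dGlue T l x x ≤ 0 := csInf_le ⟨0, chain_nonneg T l x x⟩ (chain_zero T l x)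
    have hle : ENNReal.ofReal (dGlue T l x y) ≤ ENNReal.ofReal (d x y) := by
      rw [hd_intrinsic x y]
      refine le_iInf₂ fun γ hγ => ?_
      obtain ⟨hγc, h0, h1⟩ := hγ
      rw [pathLen_eq d γ (q ∘ γ) hn (fun _ _ => hq _ _)]
      have := hHL.main hq0 (dGlue T l x) hG γ (Vs T) (Vs_finite T) 0 1 zero_le_one hγc
        (fun _ _ h => h)
      refine le_trans ?_ this
      rw [h0, h1, edist_dist]
      apply ENNReal.ofReal_le_ofReal
      rw [Real.dist_eq]
      have := neg_abs_le (dGlue T l x x - dGlue T l x y)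
      linarith
    exact (ENNReal.ofReal_le_ofReal_iff (hn x y)).1 hle
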